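/- In the blow-up setup, u_i → 0 in C^{2k}_loc(closure(B)∖{0}): for every compact set K ⊂ closure(B)∖{0} and every integer 0 ≤ j ≤ 2k, sup_{x ∈ K} |∇^j u_i(x)| → 0 as i → ∞. -/

import Mathlib

/-!
Write `s = -log ‖x‖`, `m = (n - 2k)/2` and `v(s) = e^{-ms} u(e^{-s})`. The punctured ball becomes the
half-line `s > 0`, and since the exponent is critical the equation becomes
`∏ (∂ - a_j) v = λ e^{-2ks} v + |v|^q v` with `q = 2* - 2`, where the `2k` exponents `a_j` are
`±m, ±(m+2), …, ±(m+2k-2)` (`iterLap_radial`). They are ordered with the negative ones first and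
symmetrically, `a_{2k-1-j} = -a_j` (`expo`). The functions `D_j = (∂ - a_{j-1}) ⋯ (∂ - a_0) v` form a
`Chain`. The Dirichlet conditions say `D_j(0) = 0` for `j < k`, and the bound on `‖u‖_{L^{2*}}` is a
bound on `∫ |v|^{q+2} ds`.

The energy bound gives bounds for all `D_j`, uniform in `i` and `s` (`ChainSeq.exists_bound`). Along
a subsequence the data at `s = 0` converge, and a Gronwall estimate gives locally uniform convergence
to a solution of the limit equation `D_{2k} = |D_0|^q D_0` with finite energy and Dirichlet data. This
solution vanishes (`Chain.eq_zero`). Hence the data at `s = 0` tend to zero, so all `D_j` tend to zero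
uniformly on compact sets of `s`; this is the assertion, after returning to `x`.

Nonexistence for the limit problem rests on sign changes and needs no regularity of `u` at the origin.
Finite energy forces all `D_j`, `j < 2k`, to decay at infinity. The Pohozaev quantity is conserved and
vanishes at infinity, so `D_k(0) = 0` as well (`Chain.pohozaev_zero`). By Rolle's theorem for
`∂ - a`, a zero at `0` or decay at infinity (when `a ≥ 0`) preserves the number of sign changes, and
both together gain one (`AltPts.left`, `AltPts.right`, `AltPts.both`). At step `k` both are available,
so `D_{2k}` has more sign changes than `D_0`; but the two have the same sign everywhere, so a
non-trivial `v` changes sign infinitely often. Zeros accumulating at a finite point contradict unique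
continuation (`Chain.eq_zero_of_accZero`), and arbitrarily large zeros are excluded because they would
make `v` decay faster than any exponential and then vanish near infinity (`Chain.nonosc`).
-/

open MeasureTheory Metric Filter Topology Real

noncomputable section

def lap {n : ℕ} (u : EuclideanSpace ℝ (Fin n) → ℝ) : EuclideanSpace ℝ (Fin n) → ℝ :=
  fun x => ∑ i : Fin n, iteratedFDeriv ℝ 2 u x (fun _ => EuclideanSpace.single i 1)

def iterLap {n : ℕ} (k : ℕ) (u : EuclideanSpace ℝ (Fin n) → ℝ) :
    EuclideanSpace ℝ (Fin n) → ℝ :=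
  lap^[k] u

def twoStar (n k : ℕ) : ℝ := 2 * n / ((n : ℝ) - 2 * k)

def ank (n k : ℕ) : ℝ :=
  (∏ j ∈ Finset.range (2 * k), ((n : ℝ) + 2 * ((j : ℝ) - (k : ℝ)))) ^ (-(1 : ℝ) / (k : ℝ))

def Ubub (n k : ℕ) (x : EuclideanSpace ℝ (Fin n)) : ℝ :=
  (1 / (1 + ank n k * ‖x‖ ^ 2)) ^ (((n : ℝ) - 2 * k) / 2)

def BlowUpSetup (n k : ℕ) (M : ℝ) (lam : ℕ → ℝ)
    (u : ℕ → EuclideanSpace ℝ (Fin n) → ℝ) : Prop :=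
  (∀ i, 0 < lam i) ∧ Filter.Tendsto lam Filter.atTop (nhds 0) ∧
  (∀ i, ContDiff ℝ (2 * k : ℕ) (u i)) ∧
  (∀ i, ∀ x y : EuclideanSpace ℝ (Fin n), ‖x‖ = ‖y‖ → u i x = u i y) ∧
  (∀ i, ∀ x ∈ Metric.ball (0 : EuclideanSpace ℝ (Fin n)) 1,
    iterLap k (u i) x - lam i * u i x = |u i x| ^ (twoStar n k - 2) * u i x) ∧
  (∀ i, ∀ x : EuclideanSpace ℝ (Fin n), ‖x‖ = 1 → ∀ j < k,
    iteratedFDeriv ℝ j (u i) x (fun _ => x) = 0) ∧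
  (∀ i, ∃ x ∈ Metric.closedBall (0 : EuclideanSpace ℝ (Fin n)) 1, u i x ≠ 0) ∧
  (∀ i, (∫ x in Metric.ball (0 : EuclideanSpace ℝ (Fin n)) 1, |u i x| ^ twoStar n k)
      ≤ M ^ twoStar n k)

def CLocConv {n : ℕ} (m : ℕ) (S : Set (EuclideanSpace ℝ (Fin n)))
    (f : ℕ → EuclideanSpace ℝ (Fin n) → ℝ) (g : EuclideanSpace ℝ (Fin n) → ℝ) : Prop :=
  ∀ K : Set (EuclideanSpace ℝ (Fin n)), K ⊆ S → IsCompact K → ∀ j ≤ m,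
    Filter.Tendsto
      (fun i => ⨆ x : K, ‖iteratedFDeriv ℝ j (f i) (x : EuclideanSpace ℝ (Fin n))
        - iteratedFDeriv ℝ j g (x : EuclideanSpace ℝ (Fin n))‖)
      Filter.atTop (nhds 0)

def Concentration (n k : ℕ) (u : ℕ → EuclideanSpace ℝ (Fin n) → ℝ)
    (ν : ℕ → ℝ) (ε₀ : ℝ) : Prop :=
  (∀ i, 0 < ν i) ∧ Filter.Tendsto ν Filter.atTop (nhds 0) ∧ (ε₀ = 1 ∨ ε₀ = -1) ∧
  CLocConv (2 * k) {(0 : EuclideanSpace ℝ (Fin n))}ᶜ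
    (fun i z => (ν i) ^ (((n : ℝ) - 2 * k) / 2) * u i ((ν i) • z))
    (fun z => ε₀ * Ubub n k z) ∧
  Filter.Tendsto (fun R : ℝ => Filter.limsup (fun i =>
      ⨆ x : {x : EuclideanSpace ℝ (Fin n) //
        x ∈ Metric.ball (0 : EuclideanSpace ℝ (Fin n)) 1 ∧ R * ν i ≤ ‖x‖},
        ‖(x : EuclideanSpace ℝ (Fin n))‖ ^ (((n : ℝ) - 2 * k) / 2)
          * |u i (x : EuclideanSpace ℝ (Fin n))|) Filter.atTop)
    Filter.atTop (nhds 0)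

def Tfun (n k : ℕ) (u : EuclideanSpace ℝ (Fin n) → ℝ) (x : EuclideanSpace ℝ (Fin n)) : ℝ :=
  (((n : ℝ) - 2 * k) / 2) * u x + fderiv ℝ u x x

def ndS {n : ℕ} (u : EuclideanSpace ℝ (Fin n) → ℝ) (x : EuclideanSpace ℝ (Fin n)) : ℝ :=
  fderiv ℝ u x (‖x‖⁻¹ • x)

def halfLapSq {n : ℕ} (k : ℕ) (u : EuclideanSpace ℝ (Fin n) → ℝ)
    (x : EuclideanSpace ℝ (Fin n)) : ℝ :=
  if k % 2 = 0 then (iterLap (k / 2) u x) ^ 2 else ‖gradient (iterLap (k / 2) u) x‖ ^ 2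

def Sfun (n k : ℕ) (u : EuclideanSpace ℝ (Fin n) → ℝ) (x : EuclideanSpace ℝ (Fin n)) : ℝ :=
  (∑ i ∈ Finset.range (k / 2),
    (-(ndS (iterLap (k - i - 1) u) x) * iterLap i (Tfun n k u) x
      + iterLap (k - i - 1) u x * ndS (iterLap i (Tfun n k u)) x))
  - (if k % 2 = 1 then ndS (iterLap (k / 2) u) x * iterLap (k / 2) (Tfun n k u) x else 0)

def sphVol (n : ℕ) : ℝ :=
  (μH[(n : ℝ) - 1] (Metric.sphere (0 : EuclideanSpace ℝ (Fin n)) 1)).toReal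

def Cnk (n k : ℕ) : ℝ :=
  1 / (((n : ℝ) - 2) * sphVol n *
    ∏ i ∈ Finset.Icc 1 (k - 1), (((n : ℝ) - 2 * k + 2 * ((i : ℝ) - 1)) * (2 * (k : ℝ) - 2 * (i : ℝ))))

/-! ### Chains of first-order operators -/

/-- A chain of quasi-derivatives: `D 0` is the base function and
`D (j+1) = (∂ - a j) (D j)` on `(0, ∞)` for `j < N`, all of them continuous up to `0`. -/
structure Chain (N : ℕ) (a : ℕ → ℝ) (D : ℕ → ℝ → ℝ) : Prop where
  cont : ∀ j ≤ N, ContinuousOn (D j) (Set.Ici 0)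
  der : ∀ j < N, ∀ s, 0 < s → HasDerivAt (D j) (a j * D j s + D (j + 1) s) s

lemma Chain.sub {N : ℕ} {a : ℕ → ℝ} {D D' : ℕ → ℝ → ℝ} (h : Chain N a D) (h' : Chain N a D') :
    Chain N a (fun j s => D j s - D' j s) where
  cont j hj := (h.cont j hj).sub (h'.cont j hj)
  der j hj s hs := by
    refine ((h.der j hj s hs).sub (h'.der j hj s hs)).congr_deriv ?_
    ring

/-- A two-sided Gronwall inequality for a function with `|E'| ≤ C E`. -/
lemma gronwall_two_sided {E E' : ℝ → ℝ} {C T : ℝ}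
    (hc : ContinuousOn E (Set.Icc 0 T)) (hd : ∀ s ∈ Set.Ioo 0 T, HasDerivAt E (E' s) s)
    (hb : ∀ s ∈ Set.Ioo 0 T, |E' s| ≤ C * E s) :
    ∀ s ∈ Set.Icc 0 T, ∀ s₀ ∈ Set.Icc 0 T, E s ≤ Real.exp (C * |s - s₀|) * E s₀ := by
  have hup : MonotoneOn (fun s => Real.exp (C * s) * E s) (Set.Icc 0 T) := by
    apply monotoneOn_of_hasDerivWithinAt_nonneg (convex_Icc 0 T) (f' := fun s =>
      Real.exp (C * s) * (C * E s + E' s))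
    · exact (by fun_prop : Continuous fun s => Real.exp (C * s)).continuousOn.mul hc
    · intro s hs
      rw [interior_Icc] at hs
      have h1 : HasDerivAt (fun s => Real.exp (C * s)) (Real.exp (C * s) * (C * 1)) s :=
        ((hasDerivAt_id s).const_mul C).exp
      exact ((h1.mul (hd s hs)).congr_deriv (by ring)).hasDerivWithinAt
    · intro s hs
      rw [interior_Icc] at hs
      have := neg_abs_le (E' s)
      have := hb s hs
      exact mul_nonneg (Real.exp_pos _).le (by linarith)
  have hdn : AntitoneOn (fun s => Real.exp (-(C * s)) * E s) (Set.Icc 0 T) := by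
    apply antitoneOn_of_hasDerivWithinAt_nonpos (convex_Icc 0 T) (f' := fun s =>
      Real.exp (-(C * s)) * (-(C * E s) + E' s))
    · exact (by fun_prop : Continuous fun s => Real.exp (-(C * s))).continuousOn.mul hc
    · intro s hs
      rw [interior_Icc] at hs
      have h1 : HasDerivAt (fun s => Real.exp (-(C * s))) (Real.exp (-(C * s)) * (-(C * 1))) s :=
        ((hasDerivAt_id s).const_mul C).neg.exp
      exact ((h1.mul (hd s hs)).congr_deriv (by ring)).hasDerivWithinAt
    · intro s hs
      rw [interior_Icc] at hs
      have := le_abs_self (E' s)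
      have := hb s hs
      exact mul_nonpos_of_nonneg_of_nonpos (Real.exp_pos _).le (by linarith)
  intro s hs s₀ hs₀
  rcases le_total s s₀ with h | h
  · have := hup hs hs₀ h
    simp only at this
    rw [abs_of_nonpos (by linarith)]
    have e : C * -(s - s₀) = C * s₀ - C * s := by ring
    rw [e, Real.exp_sub, div_mul_eq_mul_div, le_div_iff₀ (Real.exp_pos _)]
    linarith
  · have := hdn hs₀ hs h
    simp only at this
    rw [abs_of_nonneg (by linarith)]
    have e : C * (s - s₀) = -(C * s₀) - -(C * s) := by ring
    rw [e, Real.exp_sub, div_mul_eq_mul_div, le_div_iff₀ (Real.exp_pos _)]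
    linarith

/-- Continuous dependence (in both directions of `s`) for a chain whose top term is controlled by
the base function up to an error `κ`. -/
lemma Chain.gronwall {N : ℕ} {a : ℕ → ℝ} {D : ℕ → ℝ → ℝ} (h : Chain N a D) (hN : 0 < N)
    {A L κ T : ℝ} (hA : ∀ j < N, |a j| ≤ A)
    (htop : ∀ s ∈ Set.Ioo 0 T, |D N s| ≤ L * |D 0 s| + κ) :
    ∀ s ∈ Set.Icc 0 T, ∀ s₀ ∈ Set.Icc 0 T,
      κ ^ 2 + ∑ j ∈ Finset.range N, (D j s) ^ 2 ≤
        Real.exp ((2 * A + 2 + 2 * L ^ 2) * |s - s₀|) *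
          (κ ^ 2 + ∑ j ∈ Finset.range N, (D j s₀) ^ 2) := by
  have hA0 : 0 ≤ A := (abs_nonneg _).trans (hA 0 hN)
  refine gronwall_two_sided (E' := fun s => ∑ j ∈ Finset.range N,
      2 * D j s * (a j * D j s + D (j + 1) s)) ?_ ?_ ?_
  · refine continuousOn_const.add (continuousOn_finsetSum _ fun j hj => ?_)
    exact ((h.cont j (Finset.mem_range.1 hj).le).mono Set.Icc_subset_Ici_self).pow 2
  · intro s hs
    have h1 : HasDerivAt (fun s => ∑ j ∈ Finset.range N, (D j s) ^ 2)
        (∑ j ∈ Finset.range N, 2 * D j s * (a j * D j s + D (j + 1) s)) s := by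
      refine HasDerivAt.fun_sum fun j hj => ?_
      exact ((h.der j (Finset.mem_range.1 hj) s hs.1).pow 2).congr_deriv (by simp)
    exact h1.const_add _
  · intro s hs
    have hterm : ∀ j ∈ Finset.range N, |2 * D j s * (a j * D j s + D (j + 1) s)| ≤
        (2 * A + 1) * (D j s) ^ 2 + (D (j + 1) s) ^ 2 := by
      intro j hj
      have h1 := abs_le.1 (hA j (Finset.mem_range.1 hj))
      rw [abs_le]
      constructor <;>
        nlinarith [sq_nonneg (D j s - D (j + 1) s), sq_nonneg (D j s + D (j + 1) s),
          mul_nonneg (sub_nonneg.2 h1.2) (sq_nonneg (D j s)),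
          mul_nonneg (sub_nonneg.2 h1.1) (sq_nonneg (D j s))]
    have h2 : ∑ j ∈ Finset.range N, (D (j + 1) s) ^ 2 ≤
        ∑ j ∈ Finset.range N, (D j s) ^ 2 + (D N s) ^ 2 := by
      have e1 := Finset.sum_range_succ (fun j => (D j s) ^ 2) N
      have e2 := Finset.sum_range_succ' (fun j => (D j s) ^ 2) N
      nlinarith [sq_nonneg (D 0 s)]
    have h3 : (D 0 s) ^ 2 ≤ ∑ j ∈ Finset.range N, (D j s) ^ 2 :=
      Finset.single_le_sum (f := fun j => (D j s) ^ 2) (fun j _ => sq_nonneg _)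
        (Finset.mem_range.2 hN)
    have h4 : (D N s) ^ 2 ≤ 2 * L ^ 2 * (D 0 s) ^ 2 + 2 * κ ^ 2 := by
      have := htop s hs
      have h5 : (D N s) ^ 2 ≤ (L * |D 0 s| + κ) ^ 2 := by
        rw [← sq_abs]; exact pow_le_pow_left₀ (abs_nonneg _) this 2
      nlinarith [sq_nonneg (L * |D 0 s| - κ), sq_abs (D 0 s)]
    refine (Finset.abs_sum_le_sum_abs _ _).trans ((Finset.sum_le_sum hterm).trans ?_)
    rw [Finset.sum_add_distrib, ← Finset.mul_sum]
    nlinarith [mul_le_mul_of_nonneg_left h3 (by positivity : 0 ≤ 2 * L ^ 2),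
      mul_nonneg hA0 (sq_nonneg κ), mul_nonneg (sq_nonneg L) (sq_nonneg κ)]

/-- The weighted function `e^{-a (s - α)} f`, which turns `(∂ - a) f` into a derivative. -/
lemma hasDerivAt_exp_mul {f : ℝ → ℝ} {a g s : ℝ} (α : ℝ) (hf : HasDerivAt f (a * f s + g) s) :
    HasDerivAt (fun τ => Real.exp (-(a * (τ - α))) * f τ) (Real.exp (-(a * (s - α))) * g) s := by
  have h1 : HasDerivAt (fun τ => Real.exp (-(a * (τ - α))))
      (Real.exp (-(a * (s - α))) * (-(a * 1))) s :=
    (((hasDerivAt_id s).sub_const α).const_mul a).neg.exp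
  exact (h1.mul hf).congr_deriv (by ring)

lemma continuousOn_exp_mul {f : ℝ → ℝ} {S : Set ℝ} (a α : ℝ) (hf : ContinuousOn f S) :
    ContinuousOn (fun τ => Real.exp (-(a * (τ - α))) * f τ) S :=
  (by fun_prop : Continuous fun τ => Real.exp (-(a * (τ - α)))).continuousOn.mul hf

/-- Mean value theorem for `∂ - a`. -/
lemma exists_mvt {f g : ℝ → ℝ} {a p q : ℝ} (α : ℝ) (hpq : p < q)
    (hc : ContinuousOn f (Set.Icc p q))
    (hd : ∀ s ∈ Set.Ioo p q, HasDerivAt f (a * f s + g s) s) :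
    ∃ ξ ∈ Set.Ioo p q, Real.exp (-(a * (ξ - α))) * g ξ * (q - p) =
      Real.exp (-(a * (q - α))) * f q - Real.exp (-(a * (p - α))) * f p := by
  obtain ⟨ξ, hξ, h⟩ := exists_hasDerivAt_eq_slope (fun τ => Real.exp (-(a * (τ - α))) * f τ)
    (fun τ => Real.exp (-(a * (τ - α))) * g τ) hpq (continuousOn_exp_mul a α hc)
    (fun s hs => hasDerivAt_exp_mul α (hd s hs))
  refine ⟨ξ, hξ, ?_⟩
  rw [h, div_mul_cancel₀ _ (sub_ne_zero.2 (ne_of_gt hpq))]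

/-- Rolle's theorem for `∂ - a`. -/
lemma Chain.rolle {N : ℕ} {a : ℕ → ℝ} {D : ℕ → ℝ → ℝ} (h : Chain N a D) {j : ℕ} (hj : j < N)
    {p q : ℝ} (hp : 0 ≤ p) (hpq : p < q) (h0 : D j p = 0) (h1 : D j q = 0) :
    ∃ ξ ∈ Set.Ioo p q, D (j + 1) ξ = 0 := by
  obtain ⟨ξ, hξ, e⟩ := exists_mvt (f := D j) (g := D (j + 1)) (a := a j) 0 hpq
    ((h.cont j hj.le).mono fun x hx => hp.trans hx.1)
    (fun s hs => h.der j hj s (hp.trans_lt hs.1))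
  refine ⟨ξ, hξ, ?_⟩
  rw [h0, h1] at e
  have h2 : q - p ≠ 0 := sub_ne_zero.2 hpq.ne'
  have h3 := (Real.exp_pos (-(a j * (ξ - 0)))).ne'
  simpa [h2, h3] using e

/-- `f` has zeros in `(0, ∞)` accumulating at `s₀`. -/
def AccZero (f : ℝ → ℝ) (s₀ : ℝ) : Prop :=
  ∀ δ > 0, ∃ z, 0 < z ∧ z ≠ s₀ ∧ |z - s₀| < δ ∧ f z = 0

lemma AccZero.eq_zero {f : ℝ → ℝ} {s₀ : ℝ} (h : AccZero f s₀) (h0 : 0 ≤ s₀)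
    (hc : ContinuousOn f (Set.Ici 0)) : f s₀ = 0 := by
  by_contra hne
  have := Metric.continuousWithinAt_iff.1 (hc s₀ h0) |f s₀| (abs_pos.2 hne)
  obtain ⟨δ, hδ, H⟩ := this
  obtain ⟨z, hz, -, hzs, hfz⟩ := h δ hδ
  have := H (show z ∈ Set.Ici 0 from hz.le) (by rwa [Real.dist_eq])
  rw [hfz, Real.dist_eq, zero_sub, abs_neg] at this
  exact lt_irrefl _ this

lemma Chain.accZero_succ {N : ℕ} {a : ℕ → ℝ} {D : ℕ → ℝ → ℝ} (h : Chain N a D) {j : ℕ}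
    (hj : j < N) {s₀ : ℝ} (h0 : 0 ≤ s₀) (hacc : AccZero (D j) s₀) : AccZero (D (j + 1)) s₀ := by
  intro δ hδ
  have hs := hacc.eq_zero h0 (h.cont j hj.le)
  obtain ⟨z, hz, hne, hzs, hfz⟩ := hacc δ hδ
  rcases lt_or_gt_of_ne hne with hlt | hgt
  · obtain ⟨ξ, hξ, e⟩ := h.rolle hj hz.le hlt hfz hs
    refine ⟨ξ, hz.trans hξ.1, hξ.2.ne, ?_, e⟩
    rw [abs_of_neg (by linarith)] at hzs
    rw [abs_of_neg (by linarith [hξ.2])]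
    linarith [hξ.1]
  · obtain ⟨ξ, hξ, e⟩ := h.rolle hj h0 hgt hs hfz
    refine ⟨ξ, h0.trans_lt hξ.1, hξ.1.ne', ?_, e⟩
    rw [abs_of_pos (by linarith)] at hzs
    rw [abs_of_pos (by linarith [hξ.1])]
    linarith [hξ.2]

/-- Unique continuation: if the zeros of the base function accumulate at a finite point, the whole
chain vanishes. -/
lemma Chain.eq_zero_of_accZero {N : ℕ} {a : ℕ → ℝ} {D : ℕ → ℝ → ℝ} (h : Chain N a D)
    (hN : 0 < N) (htop : ∀ T, ∃ L, ∀ s ∈ Set.Ioo 0 T, |D N s| ≤ L * |D 0 s|)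
    {s₀ : ℝ} (h0 : 0 ≤ s₀) (hacc : AccZero (D 0) s₀) :
    ∀ j < N, ∀ s, 0 ≤ s → D j s = 0 := by
  have hall : ∀ j, j < N → AccZero (D j) s₀ := by
    intro j
    induction j with
    | zero => exact fun _ => hacc
    | succ j ih => exact fun hj => h.accZero_succ (by omega) h0 (ih (by omega))
  have hz : ∀ j < N, D j s₀ = 0 := fun j hj => (hall j hj).eq_zero h0 (h.cont j hj.le)
  intro j hj s hs
  obtain ⟨A, hA⟩ : ∃ A, ∀ j < N, |a j| ≤ A :=
    ⟨∑ j ∈ Finset.range N, |a j|, fun j hj => Finset.single_le_sum (f := fun j => |a j|)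
      (fun j _ => abs_nonneg _) (Finset.mem_range.2 hj)⟩
  obtain ⟨L, hL⟩ := htop (max s s₀)
  have := h.gronwall hN (κ := 0) hA (fun τ hτ => by simpa using hL τ hτ) s
    ⟨hs, le_max_left _ _⟩ s₀ ⟨h0, le_max_right _ _⟩
  have hsum : ∑ j ∈ Finset.range N, (D j s₀) ^ 2 = 0 :=
    Finset.sum_eq_zero fun i hi => by rw [hz i (Finset.mem_range.1 hi)]; simp
  rw [hsum] at this
  norm_num at this
  have h2 : (D j s) ^ 2 ≤ ∑ j ∈ Finset.range N, (D j s) ^ 2 :=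
    Finset.single_le_sum (f := fun j => (D j s) ^ 2) (fun j _ => sq_nonneg _)
      (Finset.mem_range.2 hj)
  exact pow_eq_zero_iff two_ne_zero |>.1 (le_antisymm (h2.trans this) (sq_nonneg _))

/-! ### Counting sign changes -/

/-- `AltPts f A`: there are `A + 1` increasing points in `(0, ∞)` at which `f` is non-zero with
alternating signs. -/
def AltPts (f : ℝ → ℝ) (A : ℕ) : Prop :=
  ∃ p : ℕ → ℝ, 0 < p 0 ∧ (∀ i < A, p i < p (i + 1)) ∧
    ∃ σ : ℝ, (σ = 1 ∨ σ = -1) ∧ ∀ i ≤ A, 0 < σ * (-1) ^ i * f (p i)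

lemma AltPts.congr {f g : ℝ → ℝ} {A : ℕ} (h : AltPts f A)
    (hfg : ∀ s > 0, ∃ c ≥ 0, f s = c * g s) : AltPts g A := by
  obtain ⟨p, h0, hp, σ, hσ, H⟩ := h
  have hpos : ∀ i ≤ A, 0 < p i := by
    intro i
    induction i with
    | zero => exact fun _ => h0
    | succ i ih => exact fun hi => (ih (by omega)).trans (hp i (by omega))
  refine ⟨p, h0, hp, σ, hσ, fun i hi => ?_⟩
  obtain ⟨c, hc, e⟩ := hfg (p i) (hpos i hi)
  have := H i hi
  rw [e] at this
  by_contra hcon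
  push Not at hcon
  nlinarith [mul_nonneg hc (neg_nonneg.2 hcon)]

/-- The sign-change count for one factor `∂ - a`, given points `P i ≤ Q i` between which the
mean value theorem is applied: `e^{-a s} f` increases from `P i` to `Q i` in the direction
`σ (-1)^i`. -/
lemma altPts_of_intervals {f g : ℝ → ℝ} {a : ℝ} {A : ℕ} {P Q : ℕ → ℝ} {σ : ℝ}
    (hσ : σ = 1 ∨ σ = -1)
    (hc : ContinuousOn f (Set.Ici 0)) (hd : ∀ s, 0 < s → HasDerivAt f (a * f s + g s) s)
    (hP : ∀ i ≤ A, 0 ≤ P i) (hPQ : ∀ i ≤ A, P i < Q i) (hQP : ∀ i < A, Q i ≤ P (i + 1))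
    (hs : ∀ i ≤ A, 0 < σ * (-1) ^ i *
      (Real.exp (-(a * Q i)) * f (Q i) - Real.exp (-(a * P i)) * f (P i))) :
    AltPts g A := by
  have key : ∀ i, ∃ ξ, i ≤ A → ξ ∈ Set.Ioo (P i) (Q i) ∧ 0 < σ * (-1) ^ i * g ξ := by
    intro i
    by_cases hi : i ≤ A
    · obtain ⟨ξ, hξ, e⟩ := exists_mvt (f := f) (g := g) (a := a) 0 (hPQ i hi)
        (hc.mono fun x hx => (hP i hi).trans hx.1)
        (fun s hs => hd s ((hP i hi).trans_lt hs.1))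
      refine ⟨ξ, fun _ => ⟨hξ, ?_⟩⟩
      have h1 := hs i hi
      simp only [sub_zero] at e
      rw [← e] at h1
      have h2 : 0 < Real.exp (-(a * ξ)) * (Q i - P i) :=
        mul_pos (Real.exp_pos _) (sub_pos.2 (hPQ i hi))
      have h3 : 0 < (σ * (-1) ^ i * g ξ) * (Real.exp (-(a * ξ)) * (Q i - P i)) := by
        linarith [h1]
      exact (pos_iff_pos_of_mul_pos h3).2 h2
    · exact ⟨0, fun h => absurd h hi⟩
  choose ξ hξ using key
  refine ⟨ξ, (hP 0 (Nat.zero_le _)).trans_lt (hξ 0 (Nat.zero_le _)).1.1, fun i hi => ?_, σ, hσ,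
    fun i hi => (hξ i hi).2⟩
  exact (hξ i hi.le).1.2.trans_le ((hQP i hi).trans (hξ (i + 1) hi).1.1.le)

lemma neg_sign {σ : ℝ} (hσ : σ = 1 ∨ σ = -1) : -σ = 1 ∨ -σ = -1 := by
  rcases hσ with rfl | rfl <;> simp

/-- A zero at the left endpoint `0` makes up for the sign change lost by Rolle's theorem. -/
lemma AltPts.left {f g : ℝ → ℝ} {a : ℝ} {A : ℕ} (h : AltPts f A)
    (hc : ContinuousOn f (Set.Ici 0)) (hd : ∀ s, 0 < s → HasDerivAt f (a * f s + g s) s)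
    (h0 : f 0 = 0) : AltPts g A := by
  obtain ⟨p, hp0, hp, σ, hσ, H⟩ := h
  have hpos : ∀ i ≤ A, 0 < p i := by
    intro i
    induction i with
    | zero => exact fun _ => hp0
    | succ i ih => exact fun hi => (ih (by omega)).trans (hp i (by omega))
  refine altPts_of_intervals (P := fun i => if i = 0 then 0 else p (i - 1)) (Q := p) hσ hc hd
    ?_ ?_ ?_ ?_
  · intro i hi
    rcases i with _ | i
    · simp
    · simpa using (hpos i (by omega)).le
  · intro i hi
    rcases i with _ | i
    · simpa using hp0
    · simpa using hp i (by omega)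
  · intro i hi
    simp
  · intro i hi
    have h1 := mul_pos (Real.exp_pos (-(a * p i))) (H i hi)
    rcases i with _ | i
    · simp only [if_true, h0, mul_zero, sub_zero]
      linarith
    · have h2 := mul_pos (Real.exp_pos (-(a * p i))) (H i (by omega))
      simp only [Nat.add_eq_zero_iff, one_ne_zero, and_false, if_false, Nat.add_sub_cancel]
      rw [pow_succ] at *
      linarith

/-- If `e^{-a s} f → 0` at infinity, the point at infinity makes up for the sign change lost by
Rolle's theorem. -/
lemma AltPts.right {f g : ℝ → ℝ} {a : ℝ} {A : ℕ} (h : AltPts f A)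
    (hc : ContinuousOn f (Set.Ici 0)) (hd : ∀ s, 0 < s → HasDerivAt f (a * f s + g s) s)
    (hinf : Tendsto (fun s => Real.exp (-(a * s)) * f s) atTop (𝓝 0)) : AltPts g A := by
  obtain ⟨p, hp0, hp, σ, hσ, H⟩ := h
  have hpos : ∀ i ≤ A, 0 < p i := by
    intro i
    induction i with
    | zero => exact fun _ => hp0
    | succ i ih => exact fun hi => (ih (by omega)).trans (hp i (by omega))
  have hA := mul_pos (Real.exp_pos (-(a * p A))) (H A le_rfl)
  obtain ⟨z, hz1, hz2⟩ : ∃ z, p A < z ∧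
      |Real.exp (-(a * z)) * f z| < Real.exp (-(a * p A)) * (σ * (-1) ^ A * f (p A)) := by
    have h1 := (Metric.tendsto_nhds.1 hinf _ hA).and (eventually_gt_atTop (p A))
    obtain ⟨z, hz, hz'⟩ := h1.exists
    exact ⟨z, hz', by simpa [Real.dist_eq] using hz⟩
  refine altPts_of_intervals (P := p) (Q := fun i => if i = A then z else p (i + 1)) (neg_sign hσ)
    hc hd ?_ ?_ ?_ ?_
  · exact fun i hi => (hpos i hi).le
  · intro i hi
    by_cases h : i = A
    · simpa [h] using hz1
    · simpa [h] using hp i (by omega)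
  · intro i hi
    simp [hi.ne]
  · intro i hi
    by_cases h : i = A
    · subst h
      simp only [if_true]
      have hs : |σ * (-1) ^ i| = 1 := by rcases hσ with rfl | rfl <;> simp
      have h3 : σ * (-1) ^ i * (Real.exp (-(a * z)) * f z) ≤ |Real.exp (-(a * z)) * f z| := by
        refine (le_abs_self _).trans ?_
        rw [abs_mul, hs, one_mul]
      linarith
    · have h1 := mul_pos (Real.exp_pos (-(a * p i))) (H i hi)
      have h2 := mul_pos (Real.exp_pos (-(a * p (i + 1)))) (H (i + 1) (by omega))
      simp only [h, if_false]
      rw [pow_succ] at h2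
      linarith

/-- With a zero at `0` and decay at infinity, one sign change is gained. -/
lemma AltPts.both {f g : ℝ → ℝ} {a : ℝ} {A : ℕ} (h : AltPts f A)
    (hc : ContinuousOn f (Set.Ici 0)) (hd : ∀ s, 0 < s → HasDerivAt f (a * f s + g s) s)
    (h0 : f 0 = 0)
    (hinf : Tendsto (fun s => Real.exp (-(a * s)) * f s) atTop (𝓝 0)) : AltPts g (A + 1) := by
  obtain ⟨p, hp0, hp, σ, hσ, H⟩ := h
  have hpos : ∀ i ≤ A, 0 < p i := by
    intro i
    induction i with
    | zero => exact fun _ => hp0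
    | succ i ih => exact fun hi => (ih (by omega)).trans (hp i (by omega))
  have hA := mul_pos (Real.exp_pos (-(a * p A))) (H A le_rfl)
  obtain ⟨z, hz1, hz2⟩ : ∃ z, p A < z ∧
      |Real.exp (-(a * z)) * f z| < Real.exp (-(a * p A)) * (σ * (-1) ^ A * f (p A)) := by
    have h1 := (Metric.tendsto_nhds.1 hinf _ hA).and (eventually_gt_atTop (p A))
    obtain ⟨z, hz, hz'⟩ := h1.exists
    exact ⟨z, hz', by simpa [Real.dist_eq] using hz⟩
  refine altPts_of_intervals (P := fun i => if i = 0 then 0 else p (i - 1))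
    (Q := fun i => if i = A + 1 then z else p i) hσ hc hd ?_ ?_ ?_ ?_
  · intro i hi
    rcases i with _ | i
    · simp
    · simpa using (hpos i (by omega)).le
  · intro i hi
    rcases i with _ | i
    · simpa using hp0
    · by_cases h : i = A
      · simpa [h] using hz1
      · simpa [h] using hp i (by omega)
  · intro i hi
    simp [hi.ne]
  · intro i hi
    rcases i with _ | i
    · have h1 := mul_pos (Real.exp_pos (-(a * p 0))) (H 0 (by omega))
      simp only [if_true, h0, mul_zero, sub_zero, (Nat.succ_ne_zero A).symm, if_false]
      linarith
    · by_cases h : i = A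
      · subst h
        simp only [if_true, Nat.add_eq_zero_iff, one_ne_zero, and_false, if_false,
          Nat.add_sub_cancel]
        have hs : |-(σ * (-1) ^ i)| = 1 := by rcases hσ with rfl | rfl <;> simp
        have h3 : -(-(σ * (-1) ^ i) * (Real.exp (-(a * z)) * f z)) ≤
            |Real.exp (-(a * z)) * f z| := by
          refine (neg_le_abs _).trans ?_
          rw [abs_mul, hs, one_mul]
        rw [pow_succ]
        linarith
      · have h1 := mul_pos (Real.exp_pos (-(a * p i))) (H i (by omega))
        have h2 := mul_pos (Real.exp_pos (-(a * p (i + 1)))) (H (i + 1) (by omega))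
        simp only [Nat.add_right_cancel_iff, h, Nat.add_eq_zero_iff, one_ne_zero, and_false,
          if_false, Nat.add_sub_cancel]
        rw [pow_succ] at *
        linarith

lemma tendsto_exp_mul_zero {f : ℝ → ℝ} {a : ℝ} (ha : 0 ≤ a) (hf : Tendsto f atTop (𝓝 0)) :
    Tendsto (fun s => Real.exp (-(a * s)) * f s) atTop (𝓝 0) := by
  refine squeeze_zero_norm' ?_ (by simpa using hf.norm)
  filter_upwards [eventually_ge_atTop 0] with s hs
  rw [norm_mul, Real.norm_eq_abs, abs_of_pos (Real.exp_pos _)]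
  have : Real.exp (-(a * s)) ≤ 1 := Real.exp_le_one_iff.2 (by nlinarith)
  simpa using mul_le_of_le_one_left (norm_nonneg (f s)) this

/-- Sign-change count along the whole chain. Zeros at `0` of the first `k + 1` functions and decay
at infinity of those with non-negative exponent preserve the count at every step; at step `k` both
effects occur together and one sign change is gained. -/
lemma Chain.altPts_top {k : ℕ} {a : ℕ → ℝ} {D : ℕ → ℝ → ℝ} (h : Chain (2 * k) a D) (hk : 0 < k)
    (ha : ∀ j, k ≤ j → j < 2 * k → 0 ≤ a j) (h0 : ∀ j ≤ k, D j 0 = 0)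
    (hinf : ∀ j < 2 * k, Tendsto (D j) atTop (𝓝 0)) {A : ℕ} (hA : AltPts (D 0) A) :
    AltPts (D (2 * k)) (A + 1) := by
  have h1 : ∀ j ≤ k, AltPts (D j) A := by
    intro j
    induction j with
    | zero => exact fun _ => hA
    | succ j ih =>
      intro hj
      exact (ih (by omega)).left (h.cont j (by omega)) (h.der j (by omega)) (h0 j (by omega))
  have h2 : ∀ j, k + 1 + j ≤ 2 * k → AltPts (D (k + 1 + j)) (A + 1) := by
    intro j
    induction j with
    | zero =>
      intro hj
      exact (h1 k le_rfl).both (h.cont k (by omega)) (h.der k (by omega))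
        (h0 k le_rfl) (tendsto_exp_mul_zero (ha k le_rfl (by omega)) (hinf k (by omega)))
    | succ j ih =>
      intro hj
      exact (ih (by omega)).right (h.cont _ (by omega)) (h.der _ (by omega))
        (tendsto_exp_mul_zero (ha _ (by omega) (by omega)) (hinf _ (by omega)))
  have := h2 (k - 1) (by omega)
  rwa [show k + 1 + (k - 1) = 2 * k by omega] at this

/-! ### Barriers and non-oscillation at infinity -/

/-- Upper barrier for `∂ - a`, in the unstable case (comparison from arbitrarily large zeros). -/
lemma barrier_unstable {f g ψ ψ' : ℝ → ℝ} {a θ B B' S : ℝ} (hS : 0 ≤ S)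
    (hB' : 0 ≤ B') (hBB : B ≤ θ * B')
    (hc : ContinuousOn f (Set.Ici 0)) (hd : ∀ s, 0 < s → HasDerivAt f (a * f s + g s) s)
    (hψ0 : ∀ s, 0 ≤ ψ s) (hψd : ∀ s, HasDerivAt ψ (ψ' s) s)
    (hψ : ∀ s, S < s → ψ' s - a * ψ s ≤ -(θ * ψ s)) (hg : ∀ s, S < s → |g s| ≤ B * ψ s)
    (hz : ∀ R, ∃ z, R ≤ z ∧ f z = 0) : ∀ s, S ≤ s → |f s| ≤ B' * ψ s := by
  have hψc : Continuous ψ := continuous_iff_continuousAt.2 fun s => (hψd s).continuousAt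
  have main : ∀ ε : ℝ, |ε| = 1 → ∀ s, S ≤ s → ε * f s ≤ B' * ψ s := by
    intro ε hε s hs
    obtain ⟨z, hz1, hz2⟩ := hz s
    have hmono : MonotoneOn (fun τ => Real.exp (-(a * (τ - 0))) * (ε * f τ - B' * ψ τ))
        (Set.Icc s z) := by
      apply monotoneOn_of_hasDerivWithinAt_nonneg (convex_Icc s z) (f' := fun τ =>
        Real.exp (-(a * (τ - 0))) * (ε * g τ - B' * (ψ' τ - a * ψ τ)))
      · refine continuousOn_exp_mul a 0 ?_
        exact (continuousOn_const.mul (hc.mono fun x hx => (hS.trans hs).trans hx.1)).sub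
          (continuous_const.mul hψc).continuousOn
      · intro τ hτ
        rw [interior_Icc] at hτ
        refine (hasDerivAt_exp_mul 0 ?_).hasDerivWithinAt
        refine (((hd τ (by linarith [hτ.1])).const_mul ε).sub
          ((hψd τ).const_mul B')).congr_deriv ?_
        ring
      · intro τ hτ
        rw [interior_Icc] at hτ
        refine mul_nonneg (Real.exp_pos _).le ?_
        have h1 := hg τ (by linarith [hτ.1])
        have h2 := mul_le_mul_of_nonneg_left (hψ τ (by linarith [hτ.1])) hB'
        have h3 : -(|g τ|) ≤ ε * g τ := by
          have := neg_abs_le (ε * g τ)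
          rwa [abs_mul, hε, one_mul] at this
        have h4 := mul_le_mul_of_nonneg_right hBB (hψ0 τ)
        linarith
    have h5 := hmono ⟨le_rfl, hz1⟩ ⟨hz1, le_rfl⟩ hz1
    simp only [hz2, mul_zero, zero_sub] at h5
    have h6 : Real.exp (-(a * (s - 0))) * (ε * f s - B' * ψ s) ≤ 0 := by
      refine h5.trans (mul_nonpos_of_nonneg_of_nonpos (Real.exp_pos _).le ?_)
      have := mul_nonneg hB' (hψ0 z)
      linarith
    have := nonpos_of_mul_nonpos_right h6 (Real.exp_pos _)
    linarith
  intro s hs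
  rw [abs_le]
  have h1 := main 1 (by simp) s hs
  have h2 := main (-1) (by simp) s hs
  constructor <;> linarith

/-- Upper barrier for `∂ - a`, in the stable case (comparison from the initial value at `S`). -/
lemma barrier_stable {f g ψ ψ' : ℝ → ℝ} {a θ B B' S : ℝ} (hS : 0 ≤ S)
    (hB' : 0 ≤ B') (hBB : B ≤ θ * B')
    (hc : ContinuousOn f (Set.Ici 0)) (hd : ∀ s, 0 < s → HasDerivAt f (a * f s + g s) s)
    (hψ0 : ∀ s, 0 ≤ ψ s) (hψd : ∀ s, HasDerivAt ψ (ψ' s) s)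
    (hψ : ∀ s, S < s → θ * ψ s ≤ ψ' s - a * ψ s) (hg : ∀ s, S < s → |g s| ≤ B * ψ s)
    (hz : |f S| ≤ B' * ψ S) : ∀ s, S ≤ s → |f s| ≤ B' * ψ s := by
  have hψc : Continuous ψ := continuous_iff_continuousAt.2 fun s => (hψd s).continuousAt
  have main : ∀ ε : ℝ, |ε| = 1 → ∀ s, S ≤ s → ε * f s ≤ B' * ψ s := by
    intro ε hε s hs
    have hmono : AntitoneOn (fun τ => Real.exp (-(a * (τ - 0))) * (ε * f τ - B' * ψ τ))
        (Set.Icc S s) := by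
      apply antitoneOn_of_hasDerivWithinAt_nonpos (convex_Icc S s) (f' := fun τ =>
        Real.exp (-(a * (τ - 0))) * (ε * g τ - B' * (ψ' τ - a * ψ τ)))
      · refine continuousOn_exp_mul a 0 ?_
        exact (continuousOn_const.mul (hc.mono fun x hx => hS.trans hx.1)).sub
          (continuous_const.mul hψc).continuousOn
      · intro τ hτ
        rw [interior_Icc] at hτ
        refine (hasDerivAt_exp_mul 0 ?_).hasDerivWithinAt
        refine (((hd τ (by linarith [hτ.1])).const_mul ε).sub
          ((hψd τ).const_mul B')).congr_deriv ?_
        ring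
      · intro τ hτ
        rw [interior_Icc] at hτ
        refine mul_nonpos_of_nonneg_of_nonpos (Real.exp_pos _).le ?_
        have h1 := hg τ (by linarith [hτ.1])
        have h2 := mul_le_mul_of_nonneg_left (hψ τ (by linarith [hτ.1])) hB'
        have h3 : ε * g τ ≤ |g τ| := by
          have := le_abs_self (ε * g τ)
          rwa [abs_mul, hε, one_mul] at this
        have h4 := mul_le_mul_of_nonneg_right hBB (hψ0 τ)
        linarith
    have h5 := hmono ⟨le_rfl, hs⟩ ⟨hs, le_rfl⟩ hs
    simp only at h5
    have h6 : Real.exp (-(a * (s - 0))) * (ε * f s - B' * ψ s) ≤ 0 := by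
      refine h5.trans (mul_nonpos_of_nonneg_of_nonpos (Real.exp_pos _).le ?_)
      have := le_abs_self (ε * f S)
      rw [abs_mul, hε, one_mul] at this
      linarith
    have := nonpos_of_mul_nonpos_right h6 (Real.exp_pos _)
    linarith
  intro s hs
  rw [abs_le]
  have h1 := main 1 (by simp) s hs
  have h2 := main (-1) (by simp) s hs
  constructor <;> linarith

/-- A weighted bound on the top of the chain is transported down to the base function. -/
lemma Chain.barrier {N : ℕ} {a : ℕ → ℝ} {D : ℕ → ℝ → ℝ} (h : Chain N a D)
    {ψ ψ' : ℝ → ℝ} {θ B C S : ℝ} (hS : 0 ≤ S) (hθ : 0 < θ) (hθ1 : θ ≤ 1) (hC : 0 ≤ C)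
    (hψ0 : ∀ s, 0 ≤ ψ s) (hψd : ∀ s, HasDerivAt ψ (ψ' s) s)
    (hψ : ∀ j < N, (∀ s, S < s → ψ' s - a j * ψ s ≤ -(θ * ψ s)) ∨
      ((∀ s, S < s → θ * ψ s ≤ ψ' s - a j * ψ s) ∧ |D j S| ≤ C * ψ S))
    (hz : ∀ j < N, ∀ R, ∃ z, R ≤ z ∧ D j z = 0)
    (htop : ∀ s, S ≤ s → |D N s| ≤ B * ψ s) :
    ∀ s, S ≤ s → |D 0 s| ≤ max B C / θ ^ N * ψ s := by
  have hm : 0 ≤ max B C := hC.trans (le_max_right _ _)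
  have key : ∀ i ≤ N, ∀ s, S ≤ s → |D (N - i) s| ≤ max B C / θ ^ i * ψ s := by
    intro i
    induction i with
    | zero =>
      intro _ s hs
      simp only [Nat.sub_zero, pow_zero, div_one]
      exact (htop s hs).trans (mul_le_mul_of_nonneg_right (le_max_left _ _) (hψ0 s))
    | succ i ih =>
      intro hi
      have hj : N - (i + 1) < N := by omega
      have hd := h.der _ hj
      rw [show N - (i + 1) + 1 = N - i by omega] at hd
      have hBB : max B C / θ ^ i ≤ θ * (max B C / θ ^ (i + 1)) := by
        apply le_of_eq
        field_simp
        ring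
      have hB' : 0 ≤ max B C / θ ^ (i + 1) := by positivity
      have hg : ∀ s, S < s → |D (N - i) s| ≤ max B C / θ ^ i * ψ s :=
        fun s hs => ih (by omega) s hs.le
      rcases hψ _ hj with hu | ⟨hs, hS0⟩
      · exact barrier_unstable hS hB' hBB (h.cont _ hj.le) hd hψ0 hψd hu hg (hz _ hj)
      · refine barrier_stable hS hB' hBB (h.cont _ hj.le) hd hψ0 hψd hs hg (hS0.trans ?_)
        refine mul_le_mul_of_nonneg_right ?_ (hψ0 S)
        rw [le_div_iff₀ (by positivity)]
        calc C * θ ^ (i + 1) ≤ C * 1 :=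
              mul_le_mul_of_nonneg_left (pow_le_one₀ hθ.le hθ1) hC
          _ ≤ max B C := by simp
  simpa using key N le_rfl

/-- If the top of the chain is a small multiple of the base function, any a priori weighted bound
improves to one depending only on the initial data `C`. -/
lemma Chain.absorb {N : ℕ} {a : ℕ → ℝ} {D : ℕ → ℝ → ℝ} (h : Chain N a D)
    {ψ ψ' : ℝ → ℝ} {θ C S V : ℝ} (hS : 0 ≤ S) (hθ : 0 < θ) (hθ1 : θ ≤ 1) (hC : 0 ≤ C)
    (hψ0 : ∀ s, 0 ≤ ψ s) (hψd : ∀ s, HasDerivAt ψ (ψ' s) s)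
    (hψ : ∀ j < N, (∀ s, S < s → ψ' s - a j * ψ s ≤ -(θ * ψ s)) ∨
      ((∀ s, S < s → θ * ψ s ≤ ψ' s - a j * ψ s) ∧ |D j S| ≤ C * ψ S))
    (hz : ∀ j < N, ∀ R, ∃ z, R ≤ z ∧ D j z = 0)
    (htop : ∀ s, S ≤ s → |D N s| ≤ θ ^ N / 2 * |D 0 s|)
    (hV : ∀ s, S ≤ s → |D 0 s| ≤ V * ψ s) :
    ∀ s, S ≤ s → |D 0 s| ≤ C / θ ^ N * ψ s := by
  have hθN : 0 < θ ^ N := pow_pos hθ N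
  have key : ∀ n : ℕ, ∀ s, S ≤ s → |D 0 s| ≤ max (V / 2 ^ n) (C / θ ^ N) * ψ s := by
    intro n
    induction n with
    | zero =>
      intro s hs
      refine (hV s hs).trans (mul_le_mul_of_nonneg_right ?_ (hψ0 s))
      simp
    | succ n ih =>
      intro s hs
      have h1 := h.barrier (B := θ ^ N / 2 * max (V / 2 ^ n) (C / θ ^ N)) hS hθ hθ1 hC hψ0 hψd
        hψ hz (fun τ hτ => (htop τ hτ).trans (by
          rw [mul_assoc]
          exact mul_le_mul_of_nonneg_left (ih τ hτ) (by positivity))) s hs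
      refine h1.trans (mul_le_mul_of_nonneg_right ?_ (hψ0 s))
      have hC' : 0 ≤ C / θ ^ N := by positivity
      rw [← max_div_div_right hθN.le]
      refine max_le ?_ (le_max_right _ _)
      have e : θ ^ N / 2 * max (V / 2 ^ n) (C / θ ^ N) / θ ^ N =
          max (V / 2 ^ n) (C / θ ^ N) / 2 := by field_simp
      rw [e, ← max_div_div_right zero_le_two]
      refine max_le ?_ ?_
      · rw [pow_succ, ← div_div]; exact le_max_left _ _
      · exact le_trans (by linarith) (le_max_right _ _)
  intro s hs
  have hlim : Tendsto (fun n : ℕ => max (V / 2 ^ n) (C / θ ^ N) * ψ s) atTop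
      (𝓝 (C / θ ^ N * ψ s)) := by
    have h1 : Tendsto (fun n : ℕ => V / (2 : ℝ) ^ n) atTop (𝓝 0) :=
      tendsto_const_nhds.div_atTop (tendsto_pow_atTop_atTop_of_one_lt one_lt_two)
    have h2 := (h1.max (tendsto_const_nhds (x := C / θ ^ N))).mul_const (ψ s)
    rwa [max_eq_right (by positivity)] at h2
  exact ge_of_tendsto' hlim fun n => key n s hs

lemma exists_min_abs (N : ℕ) (b : ℕ → ℝ) (hb : ∀ j < N, b j ≠ 0) :
    ∃ θ, 0 < θ ∧ θ ≤ 1 ∧ ∀ j < N, θ ≤ |b j| := by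
  induction N with
  | zero => exact ⟨1, one_pos, le_rfl, fun j hj => absurd hj (Nat.not_lt_zero _)⟩
  | succ N ih =>
    obtain ⟨θ, h0, h1, h2⟩ := ih fun j hj => hb j (by omega)
    refine ⟨min θ |b N|, lt_min h0 (abs_pos.2 (hb N (by omega))), (min_le_left _ _).trans h1,
      fun j hj => ?_⟩
    rcases Nat.lt_succ_iff_lt_or_eq.1 hj with h | rfl
    · exact (min_le_left _ _).trans (h2 j h)
    · exact min_le_right _ _

/-- Exponential decay at rate `β` near infinity. -/
def Dec (f : ℝ → ℝ) (β : ℝ) : Prop :=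
  ∃ C S, 0 ≤ C ∧ 0 ≤ S ∧ ∀ s, S ≤ s → |f s| ≤ C * Real.exp (-(β * s))

lemma Dec.mono {f : ℝ → ℝ} {β β' : ℝ} (h : Dec f β) (hβ : β' ≤ β) : Dec f β' := by
  obtain ⟨C, S, hC, hS, H⟩ := h
  refine ⟨C, S, hC, hS, fun s hs => (H s hs).trans (mul_le_mul_of_nonneg_left ?_ hC)⟩
  exact Real.exp_le_exp.2 (by nlinarith)

lemma hasDerivAt_exp_neg_mul (β s : ℝ) :
    HasDerivAt (fun τ => Real.exp (-(β * τ))) (-β * Real.exp (-(β * s))) s :=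
  (((hasDerivAt_id s).const_mul β).neg.exp).congr_deriv (by simp; ring)

lemma exists_init_bound (N : ℕ) (d : ℕ → ℝ) {w : ℝ} (hw : 0 < w) :
    ∃ C, 0 ≤ C ∧ ∀ j < N, |d j| ≤ C * w := by
  refine ⟨(∑ j ∈ Finset.range N, |d j|) / w,
    div_nonneg (Finset.sum_nonneg fun j _ => abs_nonneg _) hw.le, fun j hj => ?_⟩
  rw [div_mul_cancel₀ _ hw.ne']
  exact Finset.single_le_sum (f := fun j => |d j|) (fun j _ => abs_nonneg _) (Finset.mem_range.2 hj)

/-- By Rolle's theorem, arbitrarily large zeros are inherited along the chain. -/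
lemma Chain.unbounded_zeros {N : ℕ} {a : ℕ → ℝ} {D : ℕ → ℝ → ℝ} (h : Chain N a D)
    (hz : ∀ R, ∃ z, R ≤ z ∧ D 0 z = 0) : ∀ j ≤ N, ∀ R, ∃ z, R ≤ z ∧ D j z = 0 := by
  intro j
  induction j with
  | zero => exact fun _ => hz
  | succ j ih =>
    intro hj R
    obtain ⟨z₁, h1, e1⟩ := ih (by omega) (max R 0)
    obtain ⟨z₂, h2, e2⟩ := ih (by omega) (z₁ + 1)
    obtain ⟨ξ, hξ, e⟩ := h.rolle (by omega : j < N) ((le_max_right _ _).trans h1)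
      (by linarith : z₁ < z₂) e1 e2
    exact ⟨ξ, ((le_max_left _ _).trans h1).trans hξ.1.le, e⟩

section Nonosc

variable {N : ℕ} {a : ℕ → ℝ} {D : ℕ → ℝ → ℝ} {q : ℝ}

lemma eventually_small_coeff (hq : 0 < q) (hlim : Tendsto (D 0) atTop (𝓝 0))
    (heq : ∀ s, 0 < s → D N s = |D 0 s| ^ q * D 0 s) {ε : ℝ} (hε : 0 < ε) :
    ∃ S, 0 < S ∧ ∀ s, S ≤ s → |D 0 s| ≤ 1 ∧ |D N s| ≤ ε * |D 0 s| := by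
  have h1 : Tendsto (fun s => |D 0 s| ^ q) atTop (𝓝 0) := by
    have := hlim.abs.rpow_const (p := q) (Or.inr hq.le)
    simpa [Real.zero_rpow hq.ne'] using this
  have h2 : ∀ᶠ s in atTop, |D 0 s| ^ q < ε := h1.eventually_lt_const hε
  have h3 : ∀ᶠ s in atTop, |D 0 s| < 1 := hlim.abs.eventually_lt_const (by simp)
  obtain ⟨S, hS⟩ := eventually_atTop.1 (h2.and h3)
  refine ⟨max S 1, by positivity, fun s hs => ?_⟩
  obtain ⟨h4, h5⟩ := hS s ((le_max_left _ _).trans hs)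
  refine ⟨h5.le, ?_⟩
  rw [heq s (by linarith [le_max_right S 1]), abs_mul, abs_of_nonneg (by positivity)]
  exact mul_le_mul_of_nonneg_right h4.le (abs_nonneg _)

/-- First rate of decay for a decaying solution with arbitrarily large zeros. -/
lemma Chain.dec_init (h : Chain N a D) (hq : 0 < q) {m : ℝ} (hm : 0 < m)
    (ha : ∀ j < N, m ≤ |a j|) (hlim : Tendsto (D 0) atTop (𝓝 0))
    (heq : ∀ s, 0 < s → D N s = |D 0 s| ^ q * D 0 s)
    (hz : ∀ j < N, ∀ R, ∃ z, R ≤ z ∧ D j z = 0) : Dec (D 0) (m / 2) := by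
  set θ := min 1 (m / 2) with hθdef
  have hθ : 0 < θ := lt_min one_pos (by positivity)
  have hθ1 : θ ≤ 1 := min_le_left _ _
  have hθm : θ ≤ m / 2 := min_le_right _ _
  obtain ⟨S, hS, hSm⟩ := eventually_small_coeff hq hlim heq (by positivity : 0 < θ ^ N / 2)
  obtain ⟨C, hC, hCD⟩ := exists_init_bound N (fun j => D j S) (Real.exp_pos (-(m / 2 * S)))
  refine ⟨C / θ ^ N, S, by positivity, hS.le, fun s hs => ?_⟩
  -- The weights `e^{-βs} + η` are bounded below, so that an a priori bound is available.
  have key : ∀ η : ℝ, 0 < η → |D 0 s| ≤ C / θ ^ N * (Real.exp (-(m / 2 * s)) + η) := by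
    intro η hη
    refine h.absorb (V := 1 / η) (ψ := fun s => Real.exp (-(m / 2 * s)) + η) hS.le hθ hθ1 hC
      (fun s => by positivity) (fun s => (hasDerivAt_exp_neg_mul (m / 2) s).add_const η) ?_ hz
      (fun s hs => (hSm s hs).2) ?_ s hs
    · intro j hj
      have haj := ha j hj
      rcases le_total 0 (a j) with h0 | h0
      · left
        intro s _
        rw [abs_of_nonneg h0] at haj
        have h1 := Real.exp_pos (-(m / 2 * s))
        nlinarith [mul_nonneg (by linarith : 0 ≤ a j - θ)
          (by positivity : 0 ≤ Real.exp (-(m / 2 * s)) + η)]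
      · right
        rw [abs_of_nonpos h0] at haj
        constructor
        · intro s _
          have h1 := Real.exp_pos (-(m / 2 * s))
          nlinarith [mul_nonneg (by linarith : 0 ≤ -a j - m / 2 - θ)
            (by positivity : 0 ≤ Real.exp (-(m / 2 * s)) + η)]
        · refine (hCD j hj).trans (mul_le_mul_of_nonneg_left ?_ hC)
          simp [hη.le]
    · intro s hs
      refine (hSm s hs).1.trans ?_
      rw [div_mul_eq_mul_div, one_mul, le_div_iff₀ hη]
      have h1 := Real.exp_pos (-(m / 2 * s))
      linarith
  have hlim2 : Tendsto (fun η : ℝ => C / θ ^ N * (Real.exp (-(m / 2 * s)) + η)) (𝓝[>] 0)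
      (𝓝 (C / θ ^ N * Real.exp (-(m / 2 * s)))) := by
    have : Continuous fun η : ℝ => C / θ ^ N * (Real.exp (-(m / 2 * s)) + η) := by fun_prop
    have := this.tendsto 0
    rw [add_zero] at this
    exact this.mono_left nhdsWithin_le_nhds
  exact ge_of_tendsto hlim2 (by
    filter_upwards [self_mem_nhdsWithin] with η hη using key η hη)

/-- The nonlinearity raises a rate of decay `β` to `(1 + q) β` at the top of the chain; the zeros at
infinity and the barrier estimate carry any rate up to this one, other than the values `-a j`, back to
the base function. -/
lemma Chain.dec_step (h : Chain N a D) (hq : 0 < q)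
    (heq : ∀ s, 0 < s → D N s = |D 0 s| ^ q * D 0 s)
    (hz : ∀ j < N, ∀ R, ∃ z, R ≤ z ∧ D j z = 0) {β β' : ℝ} (hd : Dec (D 0) β)
    (hβ' : β' ≤ (1 + q) * β) (hne : ∀ j < N, β' ≠ -a j) :
    Dec (D 0) β' := by
  obtain ⟨K, S₀, hK, hS₀, H⟩ := hd
  obtain ⟨θ, hθ, hθ1, hθa⟩ := exists_min_abs N (fun j => β' + a j)
    (fun j hj h0 => hne j hj (by linarith))
  set S := S₀ + 1
  have hS : 0 < S := by positivity
  obtain ⟨C, hC, hCD⟩ := exists_init_bound N (fun j => D j S) (Real.exp_pos (-(β' * S)))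
  refine ⟨max (K ^ (q + 1)) C / θ ^ N, S, by positivity, hS.le, ?_⟩
  refine h.barrier (ψ := fun s => Real.exp (-(β' * s))) hS.le hθ hθ1 hC
    (fun s => by positivity) (hasDerivAt_exp_neg_mul β') ?_ hz ?_
  · intro j hj
    have h1 := hθa j hj
    rcases le_total 0 (β' + a j) with h0 | h0
    · left
      intro s _
      rw [abs_of_nonneg h0] at h1
      nlinarith [Real.exp_pos (-(β' * s))]
    · right
      rw [abs_of_nonpos h0] at h1
      exact ⟨fun s _ => by nlinarith [Real.exp_pos (-(β' * s))], hCD j hj⟩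
  · intro s hs
    have hs0 : 0 < s := by linarith
    have h1 := H s (by linarith)
    rw [heq s hs0, abs_mul, abs_of_nonneg (by positivity : 0 ≤ |D 0 s| ^ q)]
    calc |D 0 s| ^ q * |D 0 s| = |D 0 s| ^ (q + 1) := by
          rw [Real.rpow_add_one' (abs_nonneg _) (by linarith)]
      _ ≤ (K * Real.exp (-(β * s))) ^ (q + 1) :=
          Real.rpow_le_rpow (abs_nonneg _) h1 (by linarith)
      _ = K ^ (q + 1) * Real.exp (-((1 + q) * β * s)) := by
          rw [Real.mul_rpow hK (Real.exp_pos _).le, ← Real.exp_mul]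
          congr 2; ring
      _ ≤ K ^ (q + 1) * Real.exp (-(β' * s)) := by
          refine mul_le_mul_of_nonneg_left (Real.exp_le_exp.2 ?_) (by positivity)
          nlinarith

/-- Non-oscillation at infinity: a solution with arbitrarily large zeros decays faster than every
exponential, hence vanishes identically near infinity. -/
lemma Chain.nonosc (h : Chain N a D) (hq : 0 < q) {m : ℝ} (hm : 0 < m)
    (ha : ∀ j < N, m ≤ |a j|) (hlim : Tendsto (D 0) atTop (𝓝 0))
    (heq : ∀ s, 0 < s → D N s = |D 0 s| ^ q * D 0 s)
    (hz0 : ∀ R, ∃ z, R ≤ z ∧ D 0 z = 0) : ∃ S, 0 < S ∧ ∀ s, S ≤ s → D 0 s = 0 := by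
  have hz : ∀ j < N, ∀ R, ∃ z, R ≤ z ∧ D j z = 0 := fun j hj => h.unbounded_zeros hz0 j hj.le
  -- Rates of decay grow geometrically; the exponents of the chain are avoided on the way.
  have hgrow : ∀ n : ℕ, ∃ β, (1 + q / 2) ^ n * (m / 2) ≤ β ∧ Dec (D 0) β := by
    intro n
    induction n with
    | zero => exact ⟨m / 2, by simp, h.dec_init hq hm ha hlim heq hz⟩
    | succ n ih =>
      obtain ⟨β, hβ, hdec⟩ := ih
      have hβ0 : 0 < β := lt_of_lt_of_le (by positivity) hβ
      obtain ⟨β', hβ', hn⟩ := (Set.Ioo_infinite (show (1 + q / 2) * β < (1 + q) * β by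
        nlinarith)).exists_notMem_finset ((Finset.range N).image fun j => -a j)
      refine ⟨β', ?_, h.dec_step hq heq hz hdec hβ'.2.le fun j hj e => hn ?_⟩
      · refine le_trans ?_ hβ'.1.le
        rw [pow_succ', mul_assoc]
        exact mul_le_mul_of_nonneg_left hβ (by positivity)
      · exact Finset.mem_image.2 ⟨j, Finset.mem_range.2 hj, e.symm⟩
  set β := ∑ j ∈ Finset.range N, |a j| + 1 with hβdef
  have hβa : ∀ j < N, 1 ≤ β + a j := by
    intro j hj
    have h1 := Finset.single_le_sum (f := fun j => |a j|) (fun j _ => abs_nonneg _)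
      (Finset.mem_range.2 hj)
    have h2 := neg_abs_le (a j)
    linarith
  obtain ⟨n, hn⟩ := pow_unbounded_of_one_lt (β / (m / 2)) (by linarith : 1 < 1 + q / 2)
  rw [div_lt_iff₀ (by positivity)] at hn
  obtain ⟨β₁, hβ₁, hdec⟩ := hgrow n
  obtain ⟨K, S₀, hK, hS₀, H⟩ := hdec.mono (hn.le.trans hβ₁)
  obtain ⟨S₁, hS₁, hSm⟩ := eventually_small_coeff hq hlim heq (by norm_num : (0 : ℝ) < 1 ^ N / 2)
  have hS : 0 < max S₀ S₁ := lt_max_of_lt_right hS₁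
  refine ⟨max S₀ S₁, hS, fun s hs => ?_⟩
  have := h.absorb (θ := 1) (C := 0) (V := K) (ψ := fun s => Real.exp (-(β * s))) hS.le one_pos
    le_rfl le_rfl (fun s => by positivity) (hasDerivAt_exp_neg_mul β)
    (fun j hj => Or.inl fun s _ => by
      nlinarith [Real.exp_pos (-(β * s)), hβa j hj]) hz
    (fun s hs => (hSm s ((le_max_right _ _).trans hs)).2)
    (fun s hs => H s ((le_max_left _ _).trans hs)) s hs
  simpa using this

end Nonosc

/-! ### The Pohozaev identity and nonexistence for the limit equation -/

lemma alternating_telescope (G : ℕ → ℝ) (n : ℕ) :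
    ∑ j ∈ Finset.range n, (-1) ^ j * (G j + G (j + 1)) = G 0 - (-1) ^ n * G n := by
  induction n with
  | zero => simp
  | succ n ih => rw [Finset.sum_range_succ, ih, pow_succ]; ring

/-- The Hamiltonian (Pohozaev) quantity of the autonomous equation. For a chain whose exponents are
paired by `a (2k-1-j) = - a j`, the product rule makes its derivative telescope. -/
def pohozaev (k : ℕ) (q : ℝ) (a : ℕ → ℝ) (D : ℕ → ℝ → ℝ) (s : ℝ) : ℝ :=
  ∑ j ∈ Finset.range k, (-1) ^ j * (D (2 * k - 1 - j) s * (a j * D j s + D (j + 1) s))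
    + (-1) ^ k / 2 * (D k s) ^ 2 - |D 0 s| ^ (q + 2) / (q + 2)

section Pohozaev

variable {k : ℕ} {a : ℕ → ℝ} {D : ℕ → ℝ → ℝ} {q : ℝ}

lemma Chain.pohozaev_deriv (h : Chain (2 * k) a D) (hk : 0 < k) (hq : 0 < q)
    (hsym : ∀ j < k, a (2 * k - 1 - j) = -a j)
    (heq : ∀ s, 0 < s → D (2 * k) s = |D 0 s| ^ q * D 0 s) {s : ℝ} (hs : 0 < s) :
    HasDerivAt (pohozaev k q a D) 0 s := by
  set G : ℕ → ℝ := fun j => D (2 * k - j) s * (a j * D j s + D (j + 1) s) with hG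
  have h1 : HasDerivAt (fun s => ∑ j ∈ Finset.range k,
      (-1) ^ j * (D (2 * k - 1 - j) s * (a j * D j s + D (j + 1) s)))
      (∑ j ∈ Finset.range k, (-1) ^ j * (G j + G (j + 1))) s := by
    refine HasDerivAt.fun_sum fun j hj => HasDerivAt.const_mul _ ?_
    have hjk := Finset.mem_range.1 hj
    have d1 := h.der (2 * k - 1 - j) (by omega) s hs
    have d2 := ((h.der j (by omega) s hs).const_mul (a j)).add (h.der (j + 1) (by omega) s hs)
    refine (d1.mul d2).congr_deriv ?_
    rw [hsym j hjk, show 2 * k - 1 - j + 1 = 2 * k - j by omega]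
    simp only [hG, show 2 * k - (j + 1) = 2 * k - 1 - j by omega, Pi.add_apply]
    ring
  rw [alternating_telescope] at h1
  have h2 := ((h.der k (by omega) s hs).pow 2).const_mul ((-1) ^ k / 2 : ℝ)
  have h3 := (hasDerivAt_abs_rpow (D 0 s) (by linarith : 1 < q + 2)).comp s
    (h.der 0 (by omega) s hs)
  have h4 := (h1.add h2).sub (h3.div_const (q + 2))
  refine h4.congr_deriv ?_
  simp only [hG, Nat.sub_zero, show 2 * k - k = k by omega, heq s hs,
    show q + 2 - 2 = q by ring]
  have : q + 2 ≠ 0 := by linarith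
  field_simp
  push_cast
  ring

/-- The Pohozaev quantity vanishes at infinity and equals a multiple of `(D k 0)²` at a Dirichlet
endpoint. -/
lemma Chain.pohozaev_zero (h : Chain (2 * k) a D) (hk : 0 < k) (hq : 0 < q)
    (hsym : ∀ j < k, a (2 * k - 1 - j) = -a j)
    (heq : ∀ s, 0 < s → D (2 * k) s = |D 0 s| ^ q * D 0 s)
    (hinf : ∀ j < 2 * k, Tendsto (D j) atTop (𝓝 0)) (h0 : ∀ j < k, D j 0 = 0) :
    D k 0 = 0 := by
  have hcont : ContinuousOn (pohozaev k q a D) (Set.Ici 0) := by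
    have hc : ∀ j ≤ 2 * k, ContinuousOn (D j) (Set.Ici 0) := h.cont
    refine ((continuousOn_finsetSum _ fun j hj => ?_).add
      (continuousOn_const.mul ((hc k (by omega)).pow 2))).sub
      (((hc 0 (by omega)).abs.rpow_const fun x _ => Or.inr (by linarith)).div_const _)
    have hjk := Finset.mem_range.1 hj
    exact continuousOn_const.mul ((hc _ (by omega)).mul
      ((continuousOn_const.mul (hc _ (by omega))).add (hc _ (by omega))))
  have hconst : ∀ s, 0 < s → pohozaev k q a D s = pohozaev k q a D 0 := by
    intro s hs
    obtain ⟨ξ, -, e⟩ := exists_hasDerivAt_eq_slope (pohozaev k q a D) (fun _ => 0) hs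
      (hcont.mono Set.Icc_subset_Ici_self)
      (fun τ hτ => h.pohozaev_deriv hk hq hsym heq hτ.1)
    rw [eq_comm, div_eq_zero_iff] at e
    rcases e with e | e <;> linarith
  have hlim : Tendsto (pohozaev k q a D) atTop (𝓝 0) := by
    have h1 : Tendsto (fun s => ∑ j ∈ Finset.range k,
        (-1) ^ j * (D (2 * k - 1 - j) s * (a j * D j s + D (j + 1) s))) atTop (𝓝 0) := by
      rw [← Finset.sum_const_zero (s := Finset.range k)]
      refine tendsto_finsetSum _ fun j hj => ?_
      have hjk := Finset.mem_range.1 hj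
      have hlast : ∃ c : ℝ, Tendsto (fun s => a j * D j s + D (j + 1) s) atTop (𝓝 c) :=
        ⟨_, ((hinf j (by omega)).const_mul (a j)).add (hinf (j + 1) (by omega))⟩
      obtain ⟨c, hc⟩ := hlast
      simpa using ((hinf (2 * k - 1 - j) (by omega)).mul hc).const_mul ((-1 : ℝ) ^ j)
    have h2 : Tendsto (fun s => (-1) ^ k / 2 * (D k s) ^ 2) atTop (𝓝 0) := by
      simpa using ((hinf k (by omega)).pow 2).const_mul ((-1 : ℝ) ^ k / 2)
    have h3 : Tendsto (fun s => |D 0 s| ^ (q + 2) / (q + 2)) atTop (𝓝 0) := by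
      have := ((hinf 0 (by omega)).abs.rpow_const (p := q + 2) (Or.inr (by linarith))).div_const
        (q + 2)
      simpa [Real.zero_rpow (by linarith : q + 2 ≠ 0)] using this
    have h4 := (h1.add h2).sub h3
    simp only [add_zero, sub_zero] at h4
    exact h4
  have hJ : pohozaev k q a D 0 = 0 := by
    refine tendsto_nhds_unique (tendsto_const_nhds.congr' ?_) hlim
    filter_upwards [eventually_gt_atTop 0] with s hs using (hconst s hs).symm
  obtain ⟨l, rfl⟩ : ∃ l, k = l + 1 := ⟨k - 1, by omega⟩
  rw [pohozaev, Finset.sum_range_succ, Finset.sum_eq_zero (fun j hj => by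
    have := Finset.mem_range.1 hj
    rw [h0 j (by omega), h0 (j + 1) (by omega)]; simp)] at hJ
  rw [h0 0 (by omega), h0 l (by omega), show 2 * (l + 1) - 1 - l = l + 1 by omega, abs_zero,
    Real.zero_rpow (by linarith), pow_succ] at hJ
  have h5 : (-1 : ℝ) ^ l * (D (l + 1) 0) ^ 2 = 0 := by linear_combination 2 * hJ
  simpa using h5

lemma Chain.top_le (h : Chain (2 * k) a D) (hq : 0 < q)
    (heq : ∀ s, 0 < s → D (2 * k) s = |D 0 s| ^ q * D 0 s) (T : ℝ) :
    ∃ L, ∀ s ∈ Set.Ioo 0 T, |D (2 * k) s| ≤ L * |D 0 s| := by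
  have hc : ContinuousOn (fun s => |D 0 s| ^ q) (Set.Icc 0 T) :=
    ((h.cont 0 (by omega)).mono Set.Icc_subset_Ici_self).abs.rpow_const fun x _ => Or.inr hq.le
  obtain ⟨L, hL⟩ := isCompact_Icc.exists_bound_of_continuousOn hc
  refine ⟨L, fun s hs => ?_⟩
  rw [heq s hs.1, abs_mul]
  exact mul_le_mul_of_nonneg_right (hL s ⟨hs.1.le, hs.2.le⟩) (abs_nonneg _)

lemma AltPts.exists_zeros {f : ℝ → ℝ} {A : ℕ} (h : AltPts f A)
    (hc : ContinuousOn f (Set.Ici 0)) :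
    ∃ z : Fin A → ℝ, Function.Injective z ∧ ∀ i, 0 < z i ∧ f (z i) = 0 := by
  obtain ⟨p, hp0, hp, σ, hσ, H⟩ := h
  have hpos : ∀ i ≤ A, 0 < p i := by
    intro i
    induction i with
    | zero => exact fun _ => hp0
    | succ i ih => exact fun hi => (ih (by omega)).trans (hp i (by omega))
  have key : ∀ i : Fin A, ∃ z ∈ Set.Icc (p i) (p (i + 1)), f z = 0 := by
    intro i
    have hi := i.2
    have h1 := H i hi.le
    have h2 := H (i + 1) hi
    rw [pow_succ] at h2
    have h3 := (hc.mono fun x (hx : x ∈ Set.Icc (p i) (p (i + 1))) =>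
      (hpos i hi.le).le.trans hx.1)
    have h4 := intermediate_value_uIcc (a := p i) (b := p (i + 1)) (f := f)
      (by rwa [Set.uIcc_of_le (hp i hi).le])
    rw [Set.uIcc_of_le (hp i hi).le] at h4
    have h5 : (0 : ℝ) ∈ Set.uIcc (f (p i)) (f (p (i + 1))) := by
      rw [Set.mem_uIcc]
      rcases lt_trichotomy (σ * (-1) ^ (i : ℕ)) 0 with hc | hc | hc
      · left; constructor <;> nlinarith
      · rw [hc] at h1; linarith
      · right; constructor <;> nlinarith
    exact h4 h5
  choose z hz hfz using key
  have hne : ∀ i, f (p i) ≠ 0 ∨ A < i := by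
    intro i
    by_cases hi : i ≤ A
    · left; intro e; have := H i hi; rw [e] at this; simp at this
    · right; omega
  have hlt : ∀ i : Fin A, z i < p (i + 1) := by
    intro i
    refine lt_of_le_of_ne (hz i).2 fun e => ?_
    have := hfz i
    rw [e] at this
    rcases hne (i + 1) with h | h
    · exact h this
    · have := i.2; omega
  have hmono : ∀ j ≤ A, ∀ i ≤ j, p i ≤ p j := by
    intro j
    induction j with
    | zero => intro _ i hi; rw [Nat.le_zero.1 hi]
    | succ j ih =>
      intro hj i hi
      rcases Nat.le_succ_iff.1 hi with h | h
      · exact (ih (by omega) i h).trans (hp j (by omega)).le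
      · rw [h]
  refine ⟨z, StrictMono.injective (fun i j hij => ?_), fun i => ⟨?_, hfz i⟩⟩
  · exact (hlt i).trans_le ((hmono j j.2.le (i + 1) hij).trans (hz j).1)
  · exact (hpos i i.2.le).trans_le (hz i).1

/-- Nonexistence for the limit problem: sign-change counting along the chain gains one sign change
per turn because `D k 0 = 0` by the Pohozaev identity, so a non-trivial solution would have
infinitely many zeros. -/
theorem Chain.eq_zero (h : Chain (2 * k) a D) (hk : 0 < k) (hq : 0 < q) {m : ℝ} (hm : 0 < m)
    (hneg : ∀ j < k, a j ≤ -m) (hsym : ∀ j < k, a (2 * k - 1 - j) = -a j)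
    (heq : ∀ s, 0 < s → D (2 * k) s = |D 0 s| ^ q * D 0 s)
    (hinf : ∀ j < 2 * k, Tendsto (D j) atTop (𝓝 0)) (h0 : ∀ j < k, D j 0 = 0) :
    ∀ j < 2 * k, ∀ s, 0 ≤ s → D j s = 0 := by
  have hk2 : 0 < 2 * k := by omega
  have hpos : ∀ j, k ≤ j → j < 2 * k → m ≤ a j := by
    intro j h1 h2
    have := hsym (2 * k - 1 - j) (by omega)
    rw [show 2 * k - 1 - (2 * k - 1 - j) = j by omega] at this
    have := hneg (2 * k - 1 - j) (by omega)
    linarith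
  have hacc_imp : ∀ s₀, 0 ≤ s₀ → AccZero (D 0) s₀ → ∀ j < 2 * k, ∀ s, 0 ≤ s → D j s = 0 :=
    fun s₀ hs₀ hacc => h.eq_zero_of_accZero hk2 (h.top_le hq heq) hs₀ hacc
  -- An interval of zeros contains an accumulation point.
  have htail : ∀ S, 0 < S → (∀ s, S ≤ s → D 0 s = 0) → AccZero (D 0) S := by
    intro S hS hz δ hδ
    refine ⟨S + δ / 2, by positivity, by simp [hδ.ne'], ?_, hz _ (by linarith)⟩
    rw [add_sub_cancel_left, abs_of_pos (by positivity)]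
    linarith
  by_cases hne : ∀ s, 1 ≤ s → D 0 s = 0
  · exact hacc_imp 1 zero_le_one (htail 1 one_pos hne)
  push Not at hne
  obtain ⟨s₁, hs₁, hne⟩ := hne
  have hDk := h.pohozaev_zero hk hq hsym heq hinf h0
  have halt : ∀ A, AltPts (D 0) A := by
    intro A
    induction A with
    | zero =>
      refine ⟨fun _ => s₁, by linarith, fun i hi => absurd hi (Nat.not_lt_zero _), ?_⟩
      rcases lt_or_gt_of_ne hne with hlt | hgt
      · exact ⟨-1, Or.inr rfl, fun i hi => by rw [Nat.le_zero.1 hi]; simpa using hlt⟩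
      · exact ⟨1, Or.inl rfl, fun i hi => by rw [Nat.le_zero.1 hi]; simpa using hgt⟩
    | succ A ih =>
      refine (h.altPts_top hk (fun j h1 h2 => hm.le.trans (hpos j h1 h2)) ?_ hinf ih).congr
        fun s hs => ⟨|D 0 s| ^ q, by positivity, heq s hs⟩
      intro j hj
      rcases hj.lt_or_eq with hj | rfl
      · exact h0 j hj
      · exact hDk
  have hinfinite : {s | 0 < s ∧ D 0 s = 0}.Infinite := by
    intro hfin
    obtain ⟨z, hz, hz'⟩ := (halt (hfin.toFinset.card + 1)).exists_zeros (h.cont 0 (by omega))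
    have hcard := Finset.card_le_card_of_injOn (s := Finset.univ) (t := hfin.toFinset) z
      (fun i _ => by simpa using hz' i) hz.injOn
    simp at hcard
  by_cases hunb : ∀ R, ∃ z, R ≤ z ∧ D 0 z = 0
  · have hge : ∀ j < 2 * k, m ≤ |a j| := by
      intro j hj
      rcases lt_or_ge j k with hjk | hjk
      · exact (by linarith [hneg j hjk] : m ≤ -a j).trans (neg_le_abs _)
      · exact (hpos j hjk hj).trans (le_abs_self _)
    obtain ⟨S, hS, hSz⟩ := h.nonosc hq hm hge (hinf 0 hk2) heq hunb
    exact hacc_imp S hS.le (htail S hS hSz)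
  · push Not at hunb
    obtain ⟨R, hR⟩ := hunb
    obtain ⟨s₀, hs₀, hacc⟩ := hinfinite.exists_accPt_of_subset_isCompact
      (isCompact_Icc (a := (0 : ℝ)) (b := R)) (fun z hz => ⟨hz.1.le, by
        by_contra hcon
        exact hR z (not_le.1 hcon).le hz.2⟩)
    refine hacc_imp s₀ hs₀.1 fun δ hδ => ?_
    obtain ⟨z, ⟨hz1, hz2⟩, hz3⟩ := accPt_iff_nhds.1 hacc _ (Metric.ball_mem_nhds s₀ hδ)
    exact ⟨z, hz2.1, hz3, by simpa [Real.dist_eq] using hz1, hz2.2⟩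

end Pohozaev

/-! ### Estimates on unit intervals -/

section Interval

variable {N : ℕ} {a : ℕ → ℝ}

lemma exp_neg_mul_bounds {a ξ α : ℝ} (h : |ξ - α| ≤ 1) :
    Real.exp (-|a|) ≤ Real.exp (-(a * (ξ - α))) ∧
      Real.exp (-(a * (ξ - α))) ≤ Real.exp |a| := by
  have h1 : |a * (ξ - α)| ≤ |a| := by
    rw [abs_mul]; exact mul_le_of_le_one_right (abs_nonneg _) h
  have h2 := abs_le.1 h1
  exact ⟨Real.exp_le_exp.2 (by linarith), Real.exp_le_exp.2 (by linarith)⟩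

lemma integrableOn_abs {f : ℝ → ℝ} (hf : ContinuousOn f (Set.Ici 0)) {α β : ℝ} (h0 : 0 ≤ α) :
    IntegrableOn (fun s => |f s|) (Set.Ioc α β) :=
  ((hf.mono fun _ hx => h0.trans hx.1).abs.integrableOn_Icc).mono_set Set.Ioc_subset_Icc_self

/-- An `L¹` bound for the base function on a unit interval forces each `D j` to be small somewhere
in every subinterval of given length. -/
lemma exists_small (a : ℕ → ℝ) (N j : ℕ) (hj : j ≤ N) : ∀ δ, 0 < δ → δ ≤ 1 → ∃ C, 0 ≤ C ∧
    ∀ D, Chain N a D → ∀ α A, 0 ≤ α → (∫ s in Set.Ioc α (α + 1), |D 0 s|) ≤ A →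
      ∀ β, α ≤ β → β + δ ≤ α + 1 → ∃ ξ ∈ Set.Icc β (β + δ), |D j ξ| ≤ C * A := by
  induction j with
  | zero =>
    intro δ hδ _
    refine ⟨1 / δ, by positivity, fun D h α A hα hA β hβ hβ' => ?_⟩
    have hc : ContinuousOn (fun s => |D 0 s|) (Set.Icc β (β + δ)) :=
      ((h.cont 0 hj).mono fun x hx => (hα.trans hβ).trans hx.1).abs
    obtain ⟨ξ, hξ, hmin⟩ := isCompact_Icc.exists_isMinOn
      (Set.nonempty_Icc.2 (by linarith : β ≤ β + δ)) hc
    refine ⟨ξ, hξ, ?_⟩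
    have hint := integrableOn_abs (h.cont 0 hj) (α := α) (β := α + 1) hα
    have hsub : Set.Ioc β (β + δ) ⊆ Set.Ioc α (α + 1) := Set.Ioc_subset_Ioc hβ hβ'
    have h1 : ∫ s in Set.Ioc β (β + δ), |D 0 ξ| ≤ ∫ s in Set.Ioc β (β + δ), |D 0 s| :=
      setIntegral_mono_on (by simp) (hint.mono_set hsub) measurableSet_Ioc
        fun s hs => hmin (Set.Ioc_subset_Icc_self hs)
    have h2 : ∫ s in Set.Ioc β (β + δ), |D 0 s| ≤ ∫ s in Set.Ioc α (α + 1), |D 0 s| :=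
      setIntegral_mono_set hint (ae_of_all _ fun s => abs_nonneg _) hsub.eventuallyLE
    simp only [setIntegral_const, Measure.real, Real.volume_Ioc, add_sub_cancel_left,
      ENNReal.toReal_ofReal hδ.le, smul_eq_mul] at h1
    rw [one_div, inv_mul_eq_div, le_div_iff₀ hδ]
    linarith
  | succ j ih =>
    intro δ hδ hδ1
    obtain ⟨C, hC, H⟩ := ih (by omega) (δ / 3) (by positivity) (by linarith)
    refine ⟨6 * Real.exp |a j| * Real.exp |a j| * C / δ, by positivity,
      fun D h α A hα hA β hβ hβ' => ?_⟩
    obtain ⟨p, hp, hpA⟩ := H D h α A hα hA β hβ (by linarith)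
    obtain ⟨r, hr, hrA⟩ := H D h α A hα hA (β + 2 * (δ / 3)) (by linarith) (by linarith)
    have hpr : p < r := by linarith [hp.2, hr.1]
    obtain ⟨ξ, hξ, e⟩ := exists_mvt (f := D j) (g := D (j + 1)) (a := a j) α hpr
      ((h.cont j (by omega)).mono fun x hx => by
        have := hp.1; have := hx.1; simp only [Set.mem_Ici]; linarith)
      (fun s hs => h.der j (by omega) s (by linarith [hp.1, hs.1]))
    refine ⟨ξ, ⟨hp.1.trans hξ.1.le, by linarith [hξ.2, hr.2]⟩, ?_⟩
    have bd : ∀ x, α ≤ x → x ≤ α + 1 → |x - α| ≤ 1 := fun x h1 h2 => by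
      rw [abs_of_nonneg (by linarith)]; linarith
    have b1 := (exp_neg_mul_bounds (a := a j) (bd ξ (by linarith [hp.1, hξ.1])
      (by linarith [hr.2, hξ.2]))).1
    have b2 := (exp_neg_mul_bounds (a := a j) (bd p (by linarith [hp.1])
      (by linarith [hr.2]))).2
    have b3 := (exp_neg_mul_bounds (a := a j) (bd r (by linarith [hr.1, hp.1])
      (by linarith [hr.2]))).2
    have hX := Real.exp_pos |a j|
    have h1 : Real.exp (-|a j|) * |D (j + 1) ξ| * (δ / 3) ≤ 2 * Real.exp |a j| * (C * A) := by
      calc Real.exp (-|a j|) * |D (j + 1) ξ| * (δ / 3)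
          ≤ Real.exp (-(a j * (ξ - α))) * |D (j + 1) ξ| * (r - p) := by
            gcongr
            linarith [hp.2, hr.1]
        _ = |Real.exp (-(a j * (r - α))) * D j r - Real.exp (-(a j * (p - α))) * D j p| := by
            rw [← e, abs_mul, abs_mul, abs_of_pos (Real.exp_pos _), abs_of_pos (sub_pos.2 hpr)]
        _ ≤ Real.exp (-(a j * (r - α))) * |D j r| + Real.exp (-(a j * (p - α))) * |D j p| := by
            refine (abs_sub _ _).trans_eq ?_
            rw [abs_mul, abs_mul, abs_of_pos (Real.exp_pos _), abs_of_pos (Real.exp_pos _)]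
        _ ≤ Real.exp |a j| * (C * A) + Real.exp |a j| * (C * A) := by gcongr
        _ = _ := by ring
    rw [Real.exp_neg, mul_assoc, inv_mul_le_iff₀ hX] at h1
    rw [div_mul_eq_mul_div, le_div_iff₀ hδ]
    linarith

/-- A pointwise bound for `f` from an `L¹` bound for `(∂ - a) f` and a bound at one point. -/
lemma abs_le_of_integral {f g : ℝ → ℝ} {a α A ξ : ℝ} (hα : 0 ≤ α)
    (hf : ContinuousOn f (Set.Ici 0)) (hg : ContinuousOn g (Set.Ici 0))
    (hd : ∀ s, 0 < s → HasDerivAt f (a * f s + g s) s)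
    (hint : ∫ s in Set.Ioc α (α + 1), |g s| ≤ A) (hξ : ξ ∈ Set.Icc α (α + 1)) (hA : |f ξ| ≤ A) :
    ∀ s ∈ Set.Icc α (α + 1), |f s| ≤ 2 * Real.exp |a| * Real.exp |a| * A := by
  intro s hs
  have bd : ∀ x ∈ Set.Icc α (α + 1), |x - α| ≤ 1 := fun x hx => by
    rw [abs_of_nonneg (by linarith [hx.1])]; linarith [hx.2]
  have hsub : Set.uIcc ξ s ⊆ Set.Icc α (α + 1) := Set.uIcc_subset_Icc hξ hs
  have hsub0 : Set.uIcc ξ s ⊆ Set.Ici 0 := fun x hx => hα.trans (hsub hx).1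
  have hgc : ContinuousOn (fun τ => Real.exp (-(a * (τ - α))) * g τ) (Set.uIcc ξ s) :=
    continuousOn_exp_mul a α (hg.mono hsub0)
  have ftc := intervalIntegral.integral_eq_sub_of_hasDeriv_right
    (f := fun τ => Real.exp (-(a * (τ - α))) * f τ)
    (f' := fun τ => Real.exp (-(a * (τ - α))) * g τ) (continuousOn_exp_mul a α (hf.mono hsub0))
    (fun x hx => (hasDerivAt_exp_mul α (hd x (by
      have h1 : 0 ≤ min ξ s := le_min (hα.trans hξ.1) (hα.trans hs.1)
      exact h1.trans_lt hx.1))).hasDerivWithinAt) hgc.intervalIntegrable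
  have hIoc : Set.uIoc ξ s ⊆ Set.Ioc α (α + 1) := by
    rw [Set.uIoc]
    exact Set.Ioc_subset_Ioc (le_min hξ.1 hs.1) (max_le hξ.2 hs.2)
  have h1 : |∫ τ in ξ..s, Real.exp (-(a * (τ - α))) * g τ| ≤ Real.exp |a| * A := by
    calc |∫ τ in ξ..s, Real.exp (-(a * (τ - α))) * g τ|
        ≤ ∫ τ in Set.uIoc ξ s, |Real.exp (-(a * (τ - α))) * g τ| :=
          intervalIntegral.norm_integral_le_integral_norm_uIoc
            (f := fun τ => Real.exp (-(a * (τ - α))) * g τ)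
      _ ≤ ∫ τ in Set.uIoc ξ s, Real.exp |a| * |g τ| := by
          refine setIntegral_mono_on ?_ (((integrableOn_abs hg hα).mono_set hIoc).const_mul _)
            measurableSet_uIoc fun τ hτ => ?_
          · exact (hgc.abs.integrableOn_compact isCompact_uIcc).mono_set Set.uIoc_subset_uIcc
          · rw [abs_mul, abs_of_pos (Real.exp_pos _)]
            exact mul_le_mul_of_nonneg_right (exp_neg_mul_bounds
              (bd τ (Set.Ioc_subset_Icc_self (hIoc hτ)))).2 (abs_nonneg _)
      _ = Real.exp |a| * ∫ τ in Set.uIoc ξ s, |g τ| := integral_const_mul _ _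
      _ ≤ Real.exp |a| * A := by
          refine mul_le_mul_of_nonneg_left (le_trans ?_ hint) (Real.exp_pos _).le
          exact setIntegral_mono_set (integrableOn_abs hg hα)
            (ae_of_all _ fun s => abs_nonneg _) hIoc.eventuallyLE
  rw [ftc] at h1
  have h2 : Real.exp (-(a * (s - α))) * |f s| ≤ 2 * Real.exp |a| * A := by
    have h3 : |Real.exp (-(a * (ξ - α))) * f ξ| ≤ Real.exp |a| * A := by
      rw [abs_mul, abs_of_pos (Real.exp_pos _)]
      exact mul_le_mul (exp_neg_mul_bounds (bd ξ hξ)).2 hA (abs_nonneg _) (Real.exp_pos _).le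
    have h4 : |Real.exp (-(a * (s - α))) * f s| ≤ 2 * Real.exp |a| * A := by
      have h5 := abs_add_le (Real.exp (-(a * (s - α))) * f s - Real.exp (-(a * (ξ - α))) * f ξ)
        (Real.exp (-(a * (ξ - α))) * f ξ)
      rw [sub_add_cancel] at h5
      linarith
    rwa [abs_mul, abs_of_pos (Real.exp_pos _)] at h4
  have h3 := (mul_le_mul_of_nonneg_right (exp_neg_mul_bounds (a := a) (bd s hs)).1
    (abs_nonneg (f s))).trans h2
  rw [Real.exp_neg, inv_mul_le_iff₀ (Real.exp_pos _)] at h3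
  linarith

/-- Interior regularity on unit intervals: `L¹` bounds for the first and the last member of a chain
give uniform bounds for all members in between, with a constant independent of the interval. -/
lemma exists_unit_estimate (a : ℕ → ℝ) (N : ℕ) : ∃ C, 0 ≤ C ∧
    ∀ D, Chain N a D → ∀ α A, 0 ≤ α → (∫ s in Set.Ioc α (α + 1), |D 0 s|) ≤ A →
      (∫ s in Set.Ioc α (α + 1), |D N s|) ≤ A →
      ∀ j < N, ∀ s ∈ Set.Icc α (α + 1), |D j s| ≤ C * A := by
  have key : ∀ i ≤ N, ∃ C, 0 ≤ C ∧ ∀ D, Chain N a D → ∀ α A, 0 ≤ α →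
      (∫ s in Set.Ioc α (α + 1), |D 0 s|) ≤ A → (∫ s in Set.Ioc α (α + 1), |D N s|) ≤ A →
      (∫ s in Set.Ioc α (α + 1), |D (N - i) s|) ≤ C * A ∧
        (N - i < N → ∀ s ∈ Set.Icc α (α + 1), |D (N - i) s| ≤ C * A) := by
    intro i
    induction i with
    | zero =>
      exact fun _ => ⟨1, zero_le_one, fun D h α A hα h1 h2 => ⟨by simpa using h2, by simp⟩⟩
    | succ i ih =>
      intro hi
      obtain ⟨C₁, hC₁, H₁⟩ := ih (by omega)
      obtain ⟨C₂, hC₂, H₂⟩ := exists_small a N (N - (i + 1)) (by omega) 1 one_pos le_rfl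
      set j := N - (i + 1) with hj
      have hj1 : N - i = j + 1 := by omega
      refine ⟨2 * Real.exp |a j| * Real.exp |a j| * (C₁ + C₂), by positivity,
        fun D h α A hα h1 h2 => ?_⟩
      have hA : 0 ≤ A := (integral_nonneg fun s => abs_nonneg _).trans h1
      obtain ⟨ξ, hξ, hξA⟩ := H₂ D h α A hα h1 α le_rfl le_rfl
      have h3 := (H₁ D h α A hα h1 h2).1
      rw [hj1] at h3
      have hpt := abs_le_of_integral (A := (C₁ + C₂) * A) hα (h.cont j (by omega))
        (h.cont (j + 1) (by omega)) (fun s hs => h.der j (by omega) s hs)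
        (h3.trans (by nlinarith)) hξ (hξA.trans (by nlinarith))
      simp only [← mul_assoc] at hpt
      refine ⟨?_, fun _ s hs => hpt s hs⟩
      have h4 : ∫ s in Set.Ioc α (α + 1), |D j s| ≤ ∫ s in Set.Ioc α (α + 1),
          2 * Real.exp |a j| * Real.exp |a j| * (C₁ + C₂) * A :=
        setIntegral_mono_on (integrableOn_abs (h.cont j (by omega)) hα) (integrableOn_const (by simp))
          measurableSet_Ioc fun s hs => hpt s (Set.Ioc_subset_Icc_self hs)
      simpa [Measure.real] using h4
  choose! C hC H using key
  refine ⟨∑ i ∈ Finset.range (N + 1), |C i|, Finset.sum_nonneg fun i _ => abs_nonneg _,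
    fun D h α A hα h1 h2 j hj s hs => ?_⟩
  have hA : 0 ≤ A := (integral_nonneg fun s => abs_nonneg _).trans h1
  have h3 := (H (N - j) (by omega) D h α A hα h1 h2).2
  rw [show N - (N - j) = j by omega] at h3
  refine (h3 hj s hs).trans (mul_le_mul_of_nonneg_right ?_ hA)
  exact (le_abs_self _).trans (Finset.single_le_sum (f := fun i => |C i|)
    (fun i _ => abs_nonneg _) (Finset.mem_range.2 (by omega)))

/-- Splitting at the threshold `ε` bounds lower powers by the critical one. -/
lemma add_rpow_le {q ε x : ℝ} (hq : 0 < q) (hε : 0 < ε) (hx : 0 ≤ x) :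
    x + x ^ (q + 1) ≤ (ε + ε ^ (q + 1)) + (ε ^ (-(q + 1)) + ε ^ (-1 : ℝ)) * x ^ (q + 2) := by
  rcases le_or_gt x ε with h | h
  · have h1 : x ^ (q + 1) ≤ ε ^ (q + 1) := Real.rpow_le_rpow hx h (by linarith)
    have h2 : 0 ≤ (ε ^ (-(q + 1)) + ε ^ (-1 : ℝ)) * x ^ (q + 2) := by positivity
    linarith
  · have hx' := hε.trans h
    have e1 : x = x ^ (-(q + 1)) * x ^ (q + 2) := by
      rw [← Real.rpow_add hx']; ring_nf; simp
    have e2 : x ^ (q + 1) = x ^ (-1 : ℝ) * x ^ (q + 2) := by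
      rw [← Real.rpow_add hx']; ring_nf
    have h1 : x ^ (-(q + 1)) ≤ ε ^ (-(q + 1)) :=
      Real.rpow_le_rpow_of_nonpos hε h.le (by linarith)
    have h2 : x ^ (-1 : ℝ) ≤ ε ^ (-1 : ℝ) := Real.rpow_le_rpow_of_nonpos hε h.le (by norm_num)
    have h3 : 0 ≤ x ^ (q + 2) := by positivity
    have h4 : 0 ≤ ε + ε ^ (q + 1) := by positivity
    calc x + x ^ (q + 1) = x ^ (-(q + 1)) * x ^ (q + 2) + x ^ (-1 : ℝ) * x ^ (q + 2) := by
          rw [← e1, ← e2]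
      _ ≤ ε ^ (-(q + 1)) * x ^ (q + 2) + ε ^ (-1 : ℝ) * x ^ (q + 2) := by gcongr
      _ ≤ _ := by linarith

/-- Bounds on unit intervals in terms of the critical integral alone. -/
lemma exists_critical_estimate (a : ℕ → ℝ) (N : ℕ) {q : ℝ} (hq : 0 < q) : ∃ C, 0 ≤ C ∧
    ∀ D Λ, 1 ≤ Λ → Chain N a D →
      (∀ s, 0 ≤ s → |D N s| ≤ Λ * (|D 0 s| + |D 0 s| ^ (q + 1))) →
      ∀ α B, 0 ≤ α → (∫ s in Set.Ioc α (α + 1), |D 0 s| ^ (q + 2)) ≤ B → ∀ ε, 0 < ε →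
      ∀ j < N, ∀ s ∈ Set.Icc α (α + 1),
        |D j s| ≤ C * (Λ * ((ε + ε ^ (q + 1)) + (ε ^ (-(q + 1)) + ε ^ (-1 : ℝ)) * B)) := by
  obtain ⟨C, hC, H⟩ := exists_unit_estimate a N
  refine ⟨C, hC, fun D Λ hΛ h htop α B hα hB ε hε => ?_⟩
  have hc0 := (h.cont 0 (by omega)).mono (fun x (hx : x ∈ Set.Icc α (α + 1)) => hα.trans hx.1)
  have hpint : ∀ r : ℝ, 0 ≤ r → IntegrableOn (fun s => |D 0 s| ^ r) (Set.Ioc α (α + 1)) :=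
    fun r hr => ((hc0.abs.rpow_const fun x _ => Or.inr hr).integrableOn_Icc).mono_set
      Set.Ioc_subset_Icc_self
  set K := ε ^ (-(q + 1)) + ε ^ (-1 : ℝ)
  have hK : 0 ≤ K := by positivity
  have hi0 := integrableOn_abs (h.cont 0 (by omega)) (β := α + 1) hα
  have hrint : IntegrableOn (fun s => (ε + ε ^ (q + 1)) + K * |D 0 s| ^ (q + 2))
      (Set.Ioc α (α + 1)) := by
    refine Integrable.add (by simp) ((hpint _ (by linarith)).const_mul K)
  have h1 : ∫ s in Set.Ioc α (α + 1), ((ε + ε ^ (q + 1)) + K * |D 0 s| ^ (q + 2)) ≤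
      (ε + ε ^ (q + 1)) + K * B := by
    rw [integral_add (by simp) ((hpint _ (by linarith)).const_mul K), integral_const_mul]
    have : K * ∫ s in Set.Ioc α (α + 1), |D 0 s| ^ (q + 2) ≤ K * B := by gcongr
    simpa [Measure.real] using this
  have hpt : ∀ s, |D 0 s| + |D 0 s| ^ (q + 1) ≤ (ε + ε ^ (q + 1)) + K * |D 0 s| ^ (q + 2) :=
    fun s => add_rpow_le hq hε (abs_nonneg _)
  have hpos : ∀ s, 0 ≤ |D 0 s| ^ (q + 1) := fun s => by positivity
  refine H D h α _ hα ?_ ?_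
  · have h2 : ∫ s in Set.Ioc α (α + 1), |D 0 s| ≤ (ε + ε ^ (q + 1)) + K * B :=
      (setIntegral_mono_on hi0 hrint measurableSet_Ioc
        fun s _ => by linarith [hpt s, hpos s]).trans h1
    have h3 : 0 ≤ (ε + ε ^ (q + 1)) + K * B :=
      (integral_nonneg fun s => abs_nonneg _).trans h2
    nlinarith
  · refine (setIntegral_mono_on (integrableOn_abs (h.cont N le_rfl) hα) (hrint.const_mul Λ)
      measurableSet_Ioc fun s hs => ?_).trans ?_
    · exact (htop s (hα.trans hs.1.le)).trans (mul_le_mul_of_nonneg_left (hpt s) (by linarith))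
    · rw [integral_const_mul]
      exact mul_le_mul_of_nonneg_left h1 (by linarith)

/-- Finite critical energy forces all members of the chain to decay. -/
lemma Chain.tendsto_zero_of_energy {D : ℕ → ℝ → ℝ} (h : Chain N a D) {q B : ℝ} (hq : 0 < q)
    (htop : ∀ s, 0 ≤ s → |D N s| ≤ |D 0 s| + |D 0 s| ^ (q + 1))
    (hB : ∀ T, 0 ≤ T → (∫ s in Set.Ioc 0 T, |D 0 s| ^ (q + 2)) ≤ B) :
    ∀ j < N, Tendsto (D j) atTop (𝓝 0) := by
  intro j hj
  obtain ⟨C, hC, H⟩ := exists_critical_estimate a N hq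
  have hint : ∀ T, IntegrableOn (fun s => |D 0 s| ^ (q + 2)) (Set.Ioc 0 T) := fun T =>
    ((((h.cont 0 (by omega)).mono fun x (hx : x ∈ Set.Icc 0 T) => hx.1).abs.rpow_const
      fun x _ => Or.inr (by linarith : 0 ≤ q + 2)).integrableOn_Icc).mono_set
      Set.Ioc_subset_Icc_self
  set Φ : ℝ → ℝ := fun T => ∫ s in Set.Ioc 0 T, |D 0 s| ^ (q + 2) with hΦ
  have hmono : Monotone Φ := fun x y hxy => setIntegral_mono_set (hint y)
    (ae_of_all _ fun s => by positivity) (Set.Ioc_subset_Ioc_right hxy).eventuallyLE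
  have hbdd : BddAbove (Set.range Φ) := by
    refine ⟨B, ?_⟩
    rintro _ ⟨T, rfl⟩
    exact (hmono (le_max_left T 0)).trans (hB _ (le_max_right _ _))
  have hlim := tendsto_atTop_ciSup hmono hbdd
  have hdiff : Tendsto (fun α => Φ (α + 1) - Φ α) atTop (𝓝 0) := by
    simpa using (hlim.comp (tendsto_atTop_add_const_right atTop 1 tendsto_id)).sub hlim
  have hpiece : ∀ α, 0 ≤ α →
      ∫ s in Set.Ioc α (α + 1), |D 0 s| ^ (q + 2) = Φ (α + 1) - Φ α := by
    intro α hα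
    rw [hΦ, eq_sub_iff_add_eq', ← setIntegral_union _ measurableSet_Ioc (hint α)
      ((hint (α + 1)).mono_set (Set.Ioc_subset_Ioc_left hα)),
      Set.Ioc_union_Ioc_eq_Ioc hα (by linarith)]
    rw [Set.disjoint_left]
    exact fun x h1 h2 => not_lt.2 h1.2 h2.1
  rw [Metric.tendsto_atTop']
  intro η hη
  -- First the threshold is chosen, then the energy tail.
  have hε : ∃ ε, 0 < ε ∧ C * (ε + ε ^ (q + 1)) < η / 2 := by
    have h1 : Tendsto (fun ε : ℝ => C * (ε + ε ^ (q + 1))) (𝓝 0) (𝓝 0) := by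
      have h2 : Continuous fun ε : ℝ => C * (ε + ε ^ (q + 1)) :=
        continuous_const.mul (continuous_id.add (continuous_id.rpow_const fun x =>
          Or.inr (by linarith)))
      have h3 := h2.tendsto 0
      simpa [Real.zero_rpow (by linarith : q + 1 ≠ 0)] using h3
    obtain ⟨ε, h2, h3⟩ := ((h1.mono_left nhdsWithin_le_nhds).eventually_lt_const
      (half_pos hη) |>.and self_mem_nhdsWithin : ∀ᶠ ε in 𝓝[>] (0 : ℝ), _).exists
    exact ⟨ε, h3, h2⟩
  obtain ⟨ε, hε, hεη⟩ := hε
  set K := ε ^ (-(q + 1)) + ε ^ (-1 : ℝ)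
  have h3 : Tendsto (fun α => C * (K * (Φ (α + 1) - Φ α))) atTop (𝓝 0) := by
    simpa using (hdiff.const_mul K).const_mul C
  obtain ⟨S, hS⟩ := ((h3.eventually_lt_const (half_pos hη)).and
    (eventually_ge_atTop 0)).exists_forall_of_atTop
  refine ⟨S, fun s hs => ?_⟩
  obtain ⟨h4, h5⟩ := hS s hs.le
  have h6 := H D 1 le_rfl h (fun s hs => by simpa using htop s hs) s _ h5 (hpiece s h5).le ε hε j hj
    s ⟨le_rfl, by linarith⟩
  rw [one_mul, mul_add] at h6
  simp only [dist_zero_right, Real.norm_eq_abs]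
  linarith

end Interval

/-! ### Sequences of chains with bounded energy -/

/-- The nonlinearity `|x|^q x` is Lipschitz on bounded sets. -/
lemma abs_rpow_mul_sub_le {q R x y : ℝ} (hq : 0 < q) (hx : |x| ≤ R) (hy : |y| ≤ R) :
    |(|x| ^ q * x) - |y| ^ q * y| ≤ (q + 1) * R ^ q * |x - y| := by
  have hd : ∀ z : ℝ, HasDerivAt (fun z : ℝ => |z| ^ q * z) ((q + 1) * |z| ^ q) z := by
    intro z
    rcases eq_or_ne z 0 with rfl | hz
    · rw [abs_zero, Real.zero_rpow hq.ne', mul_zero, hasDerivAt_iff_tendsto_slope_zero]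
      have h1 : Tendsto (fun t : ℝ => |t| ^ q) (𝓝[≠] 0) (𝓝 0) := by
        have : Continuous fun t : ℝ => |t| ^ q :=
          continuous_abs.rpow_const fun x => Or.inr hq.le
        simpa [Real.zero_rpow hq.ne'] using (this.tendsto 0).mono_left nhdsWithin_le_nhds
      refine h1.congr' ?_
      filter_upwards [self_mem_nhdsWithin] with t ht
      have ht' : t ≠ 0 := ht
      simp only [zero_add, abs_zero, mul_zero, sub_zero, smul_eq_mul]
      field_simp
    · have h1 := ((hasDerivAt_abs hz).rpow_const (p := q) (Or.inl (abs_ne_zero.2 hz))).mul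
        (hasDerivAt_id z)
      refine h1.congr_deriv ?_
      have h2 : |z| ^ q = |z| ^ (q - 1) * |z| := by
        rw [← Real.rpow_add_one (abs_ne_zero.2 hz), sub_add_cancel]
      have h3 : (SignType.sign z : ℝ) * z = |z| := sign_mul_self z
      simp only [id, mul_one]
      rw [h2]
      linear_combination q * |z| ^ (q - 1) * h3
  have hb : ∀ z ∈ Set.Icc (-R) R, ‖(q + 1) * |z| ^ q‖ ≤ (q + 1) * R ^ q := by
    intro z hz
    rw [Real.norm_of_nonneg (by positivity)]
    gcongr
    exact abs_le.2 hz
  have := (convex_Icc (-R) R).norm_image_sub_le_of_norm_hasDerivWithin_le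
    (fun z _ => (hd z).hasDerivWithinAt) hb (abs_le.1 hy) (abs_le.1 hx)
  simpa using this

section Compactness

variable {k : ℕ} {a : ℕ → ℝ} {q B m : ℝ}

/-- A sequence of chains solving the perturbed equation with vanishing perturbation, Dirichlet data
and bounded critical energy. -/
structure ChainSeq (k : ℕ) (a : ℕ → ℝ) (q B : ℝ) (lam : ℕ → ℝ) (c : ℕ → ℝ → ℝ)
    (D : ℕ → ℕ → ℝ → ℝ) : Prop where
  chain : ∀ i, Chain (2 * k) a (D i)
  lim : Tendsto lam atTop (𝓝 0)
  coeff : ∀ i s, 0 ≤ s → |c i s| ≤ lam i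
  eqn : ∀ i s, 0 ≤ s → D i (2 * k) s = c i s * D i 0 s + |D i 0 s| ^ q * D i 0 s
  dirichlet : ∀ i, ∀ j < k, D i j 0 = 0
  energy : ∀ i T, 0 ≤ T → (∫ s in Set.Ioc 0 T, |D i 0 s| ^ (q + 2)) ≤ B

variable {lam : ℕ → ℝ} {c : ℕ → ℝ → ℝ} {D : ℕ → ℕ → ℝ → ℝ}

lemma ChainSeq.comp (h : ChainSeq k a q B lam c D) {φ : ℕ → ℕ} (hφ : Tendsto φ atTop atTop) :
    ChainSeq k a q B (lam ∘ φ) (c ∘ φ) (D ∘ φ) where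
  chain _ := h.chain _
  lim := h.lim.comp hφ
  coeff _ := h.coeff _
  eqn _ := h.eqn _
  dirichlet _ := h.dirichlet _
  energy _ := h.energy _

/-- Uniform bounds, from the critical energy on unit intervals. -/
lemma ChainSeq.exists_bound (h : ChainSeq k a q B lam c D) (hq : 0 < q) :
    ∃ R, 1 ≤ R ∧ ∀ i, ∀ j < 2 * k, ∀ s, 0 ≤ s → |D i j s| ≤ R := by
  obtain ⟨C, hC, H⟩ := exists_critical_estimate a (2 * k) hq
  obtain ⟨Λ₀, hΛ₀⟩ := h.lim.bddAbove_range
  set Λ := max Λ₀ 1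
  have hΛ : ∀ i, lam i ≤ Λ := fun i => (hΛ₀ ⟨i, rfl⟩).trans (le_max_left _ _)
  refine ⟨max 1 (C * (Λ * (((1 : ℝ) + 1 ^ (q + 1)) + ((1 : ℝ) ^ (-(q + 1)) + 1 ^ (-1 : ℝ)) * B))),
    le_max_left _ _, fun i j hj s hs => ?_⟩
  refine le_trans ?_ (le_max_right _ _)
  refine H (D i) Λ (le_max_right _ _) (h.chain i) ?_ s B hs ?_ 1 one_pos j hj s
    ⟨le_rfl, by linarith⟩
  · intro s hs
    rw [h.eqn i s hs, mul_add]
    refine (abs_add_le _ _).trans (add_le_add ?_ ?_)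
    · rw [abs_mul]
      exact mul_le_mul_of_nonneg_right ((h.coeff i s hs).trans (hΛ i)) (abs_nonneg _)
    · have e : |(|D i 0 s| ^ q * D i 0 s)| = |D i 0 s| ^ (q + 1) := by
        rw [abs_mul, Real.rpow_add_one' (abs_nonneg _) (by linarith), abs_of_nonneg (by positivity)]
      rw [e]
      exact le_mul_of_one_le_left (by positivity) (le_max_right _ _)
  · refine le_trans ?_ (h.energy i (s + 1) (by linarith))
    refine setIntegral_mono_set ?_ (ae_of_all _ fun s => by positivity)
      (Set.Ioc_subset_Ioc_left hs).eventuallyLE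
    exact (((((h.chain i).cont 0 (by omega)).mono fun x (hx : x ∈ Set.Icc 0 (s + 1)) =>
      hx.1).abs.rpow_const fun x _ => Or.inr (by linarith : 0 ≤ q + 2)).integrableOn_Icc).mono_set
      Set.Ioc_subset_Icc_self

lemma exists_abs_bound (a : ℕ → ℝ) (N : ℕ) : ∃ A, ∀ j < N, |a j| ≤ A :=
  ⟨∑ j ∈ Finset.range N, |a j|, fun _ hj => Finset.single_le_sum (f := fun j => |a j|)
    (fun _ _ => abs_nonneg _) (Finset.mem_range.2 hj)⟩

/-- Convergent initial data have zero limit: the chains converge locally uniformly to a solution of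
the limit equation, which vanishes by the Liouville theorem `Chain.eq_zero`. -/
lemma ChainSeq.init_limit_eq_zero (h : ChainSeq k a q B lam c D) (hk : 0 < k) (hq : 0 < q)
    (hm : 0 < m) (hneg : ∀ j < k, a j ≤ -m) (hsym : ∀ j < k, a (2 * k - 1 - j) = -a j)
    {x : ℕ → ℝ} (hx : ∀ j < 2 * k, Tendsto (fun i => D i j 0) atTop (𝓝 (x j))) :
    ∀ j < 2 * k, x j = 0 := by
  have hk2 : 0 < 2 * k := by omega
  obtain ⟨R, hR, hbd⟩ := h.exists_bound hq
  obtain ⟨A, hA⟩ := exists_abs_bound a (2 * k)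
  set L := (q + 1) * R ^ q with hL
  have hlam : ∀ i, 0 ≤ lam i := fun i => (abs_nonneg _).trans (h.coeff i 0 le_rfl)
  have hcv : ∀ i s, 0 ≤ s → |c i s * D i 0 s| ≤ lam i * R := by
    intro i s hs
    rw [abs_mul]
    exact mul_le_mul (h.coeff i s hs) (hbd i 0 hk2 s hs) (abs_nonneg _) (hlam i)
  -- Continuous dependence makes the sequence uniformly Cauchy.
  have hest : ∀ T, 0 ≤ T → ∀ i l, ∀ j < 2 * k, ∀ s ∈ Set.Icc 0 T, (D i j s - D l j s) ^ 2 ≤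
      Real.exp ((2 * A + 2 + 2 * L ^ 2) * T) * (((lam i + lam l) * R) ^ 2 +
        ∑ j ∈ Finset.range (2 * k), (D i j 0 - D l j 0) ^ 2) := by
    intro T hT i l j hj s hs
    have h1 := ((h.chain i).sub (h.chain l)).gronwall hk2 (L := L) (κ := (lam i + lam l) * R)
      (T := T) hA (fun s hs => by
        rw [h.eqn i s hs.1.le, h.eqn l s hs.1.le]
        have e1 := hcv i s hs.1.le
        have e2 := hcv l s hs.1.le
        have e3 := abs_rpow_mul_sub_le hq (hbd i 0 hk2 s hs.1.le) (hbd l 0 hk2 s hs.1.le)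
        rw [abs_le] at e1 e2 e3 ⊢
        constructor <;> linarith [e1.1, e1.2, e2.1, e2.2, e3.1, e3.2]) s hs 0 ⟨le_rfl, hT⟩
    rw [sub_zero, abs_of_nonneg hs.1] at h1
    have h2 := Finset.single_le_sum (f := fun j => (D i j s - D l j s) ^ 2)
      (fun j _ => sq_nonneg _) (Finset.mem_range.2 hj)
    have h3 : Real.exp ((2 * A + 2 + 2 * L ^ 2) * s) ≤ Real.exp ((2 * A + 2 + 2 * L ^ 2) * T) := by
      have hA0 : 0 ≤ A := (abs_nonneg _).trans (hA 0 hk2)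
      exact Real.exp_le_exp.2 (mul_le_mul_of_nonneg_left hs.2 (by positivity))
    have h4 : 0 ≤ ((lam i + lam l) * R) ^ 2 +
        ∑ j ∈ Finset.range (2 * k), (D i j 0 - D l j 0) ^ 2 := by positivity
    nlinarith [mul_le_mul_of_nonneg_right h3 h4, sq_nonneg ((lam i + lam l) * R)]
  have hcauchy : ∀ T, 0 ≤ T → ∀ j < 2 * k,
      UniformCauchySeqOn (fun i => D i j) atTop (Set.Icc 0 T) := by
    intro T hT j hj u hu
    obtain ⟨ε, hε, hu⟩ := Metric.mem_uniformity_dist.1 hu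
    have hlim : Tendsto (fun p : ℕ × ℕ => Real.exp ((2 * A + 2 + 2 * L ^ 2) * T) *
        (((lam p.1 + lam p.2) * R) ^ 2 +
          ∑ j ∈ Finset.range (2 * k), (D p.1 j 0 - D p.2 j 0) ^ 2))
        (atTop ×ˢ atTop) (𝓝 (Real.exp ((2 * A + 2 + 2 * L ^ 2) * T) *
          (((0 + 0) * R) ^ 2 + ∑ j ∈ Finset.range (2 * k), (x j - x j) ^ 2))) := by
      refine (((((h.lim.comp tendsto_fst).add (h.lim.comp tendsto_snd)).mul_const R).pow 2).add
        (tendsto_finsetSum _ fun j hj => ?_)).const_mul _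
      have := hx j (Finset.mem_range.1 hj)
      exact ((this.comp tendsto_fst).sub (this.comp tendsto_snd)).pow 2
    simp only [add_zero, zero_mul, sub_self, ne_eq, OfNat.ofNat_ne_zero, not_false_eq_true,
      zero_pow, Finset.sum_const_zero, mul_zero] at hlim
    filter_upwards [hlim.eventually_lt_const (pow_pos hε 2)] with p hp s hs
    refine hu ?_
    rw [Real.dist_eq]
    exact abs_lt_of_sq_lt_sq ((hest T hT p.1 p.2 j hj s hs).trans_lt hp) hε.le
  -- The pointwise limit, with the top member prescribed by the limit equation.
  have hpt : ∀ j, ∀ s, ∃ y, j < 2 * k → 0 ≤ s → Tendsto (fun i => D i j s) atTop (𝓝 y) := by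
    intro j s
    by_cases hjs : j < 2 * k ∧ 0 ≤ s
    · obtain ⟨y, hy⟩ := cauchySeq_tendsto_of_complete
        ((hcauchy s hjs.2 j hjs.1).cauchySeq ⟨hjs.2, le_rfl⟩)
      exact ⟨y, fun _ _ => hy⟩
    · exact ⟨0, fun h1 h2 => absurd ⟨h1, h2⟩ hjs⟩
  choose Y hY using hpt
  set Z : ℕ → ℝ → ℝ := fun j s => if j < 2 * k then Y j s else |Y 0 s| ^ q * Y 0 s with hZ
  have hZlt : ∀ j < 2 * k, Z j = Y j := fun j hj => by ext s; simp [hZ, hj]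
  have hZtop : ∀ s, Z (2 * k) s = |Z 0 s| ^ q * Z 0 s := fun s => by simp [hZ, hk]
  have hYbd : ∀ j < 2 * k, ∀ s, 0 ≤ s → |Y j s| ≤ R := fun j hj s hs =>
    le_of_tendsto' (hY j s hj hs).abs fun i => hbd i j hj s hs
  have hunif : ∀ T, 0 ≤ T → ∀ j ≤ 2 * k,
      TendstoUniformlyOn (fun i => D i j) (Z j) atTop (Set.Icc 0 T) := by
    intro T hT j hj
    rcases hj.lt_or_eq with hj | rfl
    · rw [hZlt j hj]
      exact (hcauchy T hT j hj).tendstoUniformlyOn_of_tendsto fun s hs => hY j s hj hs.1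
    · have h0 := (hcauchy T hT 0 hk2).tendstoUniformlyOn_of_tendsto fun s hs => hY 0 s hk2 hs.1
      rw [Metric.tendstoUniformlyOn_iff] at h0 ⊢
      intro ε hε
      have hL0 : 0 < L := by positivity
      have hlR : Tendsto (fun i => lam i * R) atTop (𝓝 0) := by simpa using h.lim.mul_const R
      filter_upwards [h0 (ε / (2 * L)) (by positivity),
        hlR.eventually_lt_const (half_pos hε)] with i h1 h2 s hs
      have h3 := h1 s hs
      rw [Real.dist_eq, lt_div_iff₀ (by positivity)] at h3
      rw [hZtop, hZlt 0 hk2, h.eqn i s hs.1, Real.dist_eq, abs_lt]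
      have e1 := abs_le.1 (hcv i s hs.1)
      have e2 := abs_le.1 (abs_rpow_mul_sub_le hq (hYbd 0 hk2 s hs.1) (hbd i 0 hk2 s hs.1))
      constructor <;> linarith [e1.1, e1.2, e2.1, e2.2]
  have hZchain : Chain (2 * k) a Z := by
    constructor
    · intro j hj s hs
      have hs0 : (0 : ℝ) ≤ s := hs
      have h1 : ContinuousOn (Z j) (Set.Icc 0 (s + 1)) :=
        (hunif (s + 1) (by linarith) j hj).continuousOn
          (Eventually.frequently (Eventually.of_forall fun i =>
            ((h.chain i).cont j hj).mono fun x hx => hx.1))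
      refine (h1 s ⟨hs0, by linarith⟩).mono_of_mem_nhdsWithin ?_
      rw [← Set.Ici_inter_Iic]
      exact inter_mem_nhdsWithin _ (Iic_mem_nhds (by linarith))
    · intro j hj s hs
      have hsub : Set.Ioo 0 (s + 1) ⊆ Set.Icc 0 (s + 1) := Set.Ioo_subset_Icc_self
      have h0 := hunif (s + 1) (by linarith) j hj.le
      have h1 := hunif (s + 1) (by linarith) (j + 1) hj
      have h2 : TendstoUniformlyOn (fun i s => a j * D i j s + D i (j + 1) s)
          (fun s => a j * Z j s + Z (j + 1) s) atTop (Set.Ioo 0 (s + 1)) := by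
        rw [Metric.tendstoUniformlyOn_iff] at h0 h1 ⊢
        intro ε hε
        filter_upwards [h0 (ε / (2 * (|a j| + 1))) (by positivity), h1 (ε / 2) (by positivity)]
          with i e0 e1 t ht
        have e0 := e0 t (hsub ht)
        have e1 := e1 t (hsub ht)
        rw [Real.dist_eq] at e0 e1 ⊢
        rw [lt_div_iff₀ (by positivity)] at e0
        have e2 : |a j * (Z j t - D i j t)| ≤ |Z j t - D i j t| * (|a j| + 1) := by
          rw [abs_mul]; nlinarith [abs_nonneg (Z j t - D i j t)]
        rw [show a j * Z j t + Z (j + 1) t - (a j * D i j t + D i (j + 1) t) =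
          a j * (Z j t - D i j t) + (Z (j + 1) t - D i (j + 1) t) by ring]
        linarith [abs_add_le (a j * (Z j t - D i j t)) (Z (j + 1) t - D i (j + 1) t)]
      refine hasDerivAt_of_tendstoLocallyUniformlyOn isOpen_Ioo h2.tendstoLocallyUniformlyOn
        (Eventually.of_forall fun i t ht => (h.chain i).der j hj t ht.1)
        (fun t ht => h0.tendsto_at (hsub ht)) ⟨hs, by linarith⟩
  have hZenergy : ∀ T, 0 ≤ T → (∫ s in Set.Ioc 0 T, |Z 0 s| ^ (q + 2)) ≤ B := by
    intro T hT
    have h1 : Tendsto (fun i => ∫ s in Set.Ioc 0 T, |D i 0 s| ^ (q + 2)) atTop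
        (𝓝 (∫ s in Set.Ioc 0 T, |Z 0 s| ^ (q + 2))) := by
      refine tendsto_integral_of_dominated_convergence (fun _ => R ^ (q + 2)) ?_
        (integrable_const _) ?_ ?_
      · intro i
        have hc : ContinuousOn (fun s => |D i 0 s| ^ (q + 2)) (Set.Ioc 0 T) :=
          ((((h.chain i).cont 0 (by omega)).mono fun x hx => hx.1.le).abs.rpow_const
            fun x _ => Or.inr (by linarith))
        exact hc.aestronglyMeasurable measurableSet_Ioc
      · intro i
        refine (ae_restrict_iff' measurableSet_Ioc).2 (ae_of_all _ fun s hs => ?_)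
        rw [Real.norm_of_nonneg (by positivity)]
        exact Real.rpow_le_rpow (abs_nonneg _) (hbd i 0 hk2 s hs.1.le) (by linarith)
      · refine (ae_restrict_iff' measurableSet_Ioc).2 (ae_of_all _ fun s hs => ?_)
        rw [hZlt 0 hk2]
        exact (hY 0 s hk2 hs.1.le).abs.rpow_const (Or.inr (by linarith))
    exact le_of_tendsto' h1 fun i => h.energy i T hT
  have hZinf := hZchain.tendsto_zero_of_energy hq (fun s _ => by
    rw [hZtop, abs_mul, Real.rpow_add_one' (abs_nonneg _) (by linarith),
      abs_of_nonneg (by positivity : 0 ≤ |Z 0 s| ^ q)]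
    linarith [abs_nonneg (Z 0 s)]) hZenergy
  have hZx : ∀ j < 2 * k, Z j 0 = x j := fun j hj => by
    rw [hZlt j hj]; exact tendsto_nhds_unique (hY j 0 hj le_rfl) (hx j hj)
  have hzero := hZchain.eq_zero hk hq hm hneg hsym (fun s _ => hZtop s) hZinf (fun j hj => by
    rw [hZx j (by omega)]
    refine tendsto_nhds_unique (hx j (by omega)) ?_
    simp only [h.dirichlet _ j hj]
    exact tendsto_const_nhds)
  exact fun j hj => by rw [← hZx j hj, hzero j hj 0 le_rfl]

/-- The Cauchy data at `0` tend to zero, by compactness. -/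
theorem ChainSeq.tendsto_init (h : ChainSeq k a q B lam c D) (hk : 0 < k) (hq : 0 < q)
    (hm : 0 < m) (hneg : ∀ j < k, a j ≤ -m) (hsym : ∀ j < k, a (2 * k - 1 - j) = -a j) :
    ∀ j < 2 * k, Tendsto (fun i => D i j 0) atTop (𝓝 0) := by
  obtain ⟨R, hR, hbd⟩ := h.exists_bound hq
  have hvec : Tendsto (fun i => fun j : Fin (2 * k) => D i j 0) atTop (𝓝 0) := by
    refine tendsto_of_subseq_tendsto fun φ hφ => ?_
    obtain ⟨x, -, ψ, hψ, hlim⟩ := tendsto_subseq_of_bounded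
      (Metric.isBounded_closedBall (x := (0 : Fin (2 * k) → ℝ)) (r := R))
      (x := fun i => fun j : Fin (2 * k) => D (φ i) j 0) (fun i => by
        rw [mem_closedBall_zero_iff, pi_norm_le_iff_of_nonneg (by linarith)]
        exact fun j => hbd _ _ j.2 0 le_rfl)
    refine ⟨ψ, ?_⟩
    have hx := (h.comp (hφ.comp hψ.tendsto_atTop)).init_limit_eq_zero hk hq hm hneg hsym
      (x := fun j => if hj : j < 2 * k then x ⟨j, hj⟩ else 0) (fun j hj => by
        simp only [hj, dif_pos]
        exact (tendsto_pi_nhds.1 hlim) ⟨j, hj⟩)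
    have hx0 : x = 0 := by
      ext ⟨j, hj⟩
      simpa [hj] using hx j hj
    rw [← hx0]
    exact hlim
  exact fun j hj => (tendsto_pi_nhds.1 hvec) ⟨j, hj⟩

/-- Every member of the chain tends to zero uniformly on compact intervals. -/
theorem ChainSeq.tendsto_zero (h : ChainSeq k a q B lam c D) (hk : 0 < k) (hq : 0 < q)
    (hm : 0 < m) (hneg : ∀ j < k, a j ≤ -m) (hsym : ∀ j < k, a (2 * k - 1 - j) = -a j)
    {T : ℝ} (hT : 0 ≤ T) {ε : ℝ} (hε : 0 < ε) :
    ∀ᶠ i in atTop, ∀ j ≤ 2 * k, ∀ s ∈ Set.Icc 0 T, |D i j s| ≤ ε := by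
  have hk2 : 0 < 2 * k := by omega
  obtain ⟨R, hR, hbd⟩ := h.exists_bound hq
  obtain ⟨A, hA⟩ := exists_abs_bound a (2 * k)
  obtain ⟨Λ₀, hΛ₀⟩ := h.lim.bddAbove_range
  set L := |Λ₀| + R ^ q with hL
  have hL0 : 0 ≤ L := by positivity
  have htop : ∀ i s, 0 ≤ s → |D i (2 * k) s| ≤ L * |D i 0 s| := by
    intro i s hs
    rw [h.eqn i s hs, ← add_mul, abs_mul]
    refine mul_le_mul_of_nonneg_right ((abs_add_le _ _).trans (add_le_add ?_ ?_)) (abs_nonneg _)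
    · exact ((h.coeff i s hs).trans (hΛ₀ ⟨i, rfl⟩)).trans (le_abs_self _)
    · rw [abs_of_nonneg (by positivity)]
      exact Real.rpow_le_rpow (abs_nonneg _) (hbd i 0 hk2 s hs) hq.le
  have hlim : Tendsto (fun i => Real.exp ((2 * A + 2 + 2 * L ^ 2) * T) *
      ∑ j ∈ Finset.range (2 * k), (D i j 0) ^ 2) atTop (𝓝 0) := by
    have h1 : Tendsto (fun i => ∑ j ∈ Finset.range (2 * k), (D i j 0) ^ 2) atTop
        (𝓝 (∑ j ∈ Finset.range (2 * k), (0 : ℝ) ^ 2)) :=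
      tendsto_finsetSum _ fun j hj =>
        (h.tendsto_init hk hq hm hneg hsym j (Finset.mem_range.1 hj)).pow 2
    simpa using h1.const_mul (Real.exp ((2 * A + 2 + 2 * L ^ 2) * T))
  set δ := ε / (L + 1) with hδ
  have hδ0 : 0 < δ := by positivity
  have hδε : (L + 1) * δ = ε := by rw [hδ]; field_simp
  filter_upwards [hlim.eventually_lt_const (pow_pos hδ0 2)] with i hi
  have hlow : ∀ j < 2 * k, ∀ s ∈ Set.Icc 0 T, |D i j s| ≤ δ := by
    intro j hj s hs
    have h1 := (h.chain i).gronwall hk2 (L := L) (κ := 0) (T := T) hA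
      (fun s hs => by simpa using htop i s hs.1.le) s hs 0 ⟨le_rfl, hT⟩
    rw [sub_zero, abs_of_nonneg hs.1, zero_pow two_ne_zero, zero_add, zero_add] at h1
    have h2 := Finset.single_le_sum (f := fun j => (D i j s) ^ 2)
      (fun j _ => sq_nonneg _) (Finset.mem_range.2 hj)
    have h3 : Real.exp ((2 * A + 2 + 2 * L ^ 2) * s) ≤ Real.exp ((2 * A + 2 + 2 * L ^ 2) * T) := by
      have hA0 : 0 ≤ A := (abs_nonneg _).trans (hA 0 hk2)
      exact Real.exp_le_exp.2 (mul_le_mul_of_nonneg_left hs.2 (by positivity))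
    have h4 : 0 ≤ ∑ j ∈ Finset.range (2 * k), (D i j 0) ^ 2 := by positivity
    have h5 := mul_le_mul_of_nonneg_right h3 h4
    exact abs_le_of_sq_le_sq (by linarith) hδ0.le
  intro j hj s hs
  rcases hj.lt_or_eq with hj | rfl
  · nlinarith [hlow j hj s hs]
  · have h1 := mul_le_mul_of_nonneg_left (hlow 0 hk2 s hs) hL0
    linarith [htop i s hs.1]

end Compactness

/-! ### Factorised operators and the radial Laplacian -/

/-- Composition of the first-order operators `∂ - a`, the head of the list acting first. -/
def opL : List ℝ → (ℝ → ℝ) → ℝ → ℝ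
  | [], f => f
  | a :: l, f => opL l (fun s => deriv f s - a * f s)

lemma opL_append (l l' : List ℝ) (f : ℝ → ℝ) : opL (l ++ l') f = opL l' (opL l f) := by
  induction l generalizing f with
  | nil => rfl
  | cons a l ih => exact ih _

lemma contDiff_deriv_sub {N : ℕ} {f : ℝ → ℝ} (hf : ContDiff ℝ (N + 1 : ℕ) f) (a : ℝ) :
    ContDiff ℝ N (fun s => deriv f s - a * f s) := by
  have h1 : ContDiff ℝ N (deriv f) := by
    have : ContDiff ℝ ((N : WithTop ℕ∞) + 1) f := by exact_mod_cast hf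
    exact (contDiff_succ_iff_deriv.1 this).2.2
  exact h1.sub (contDiff_const.mul (hf.of_le (by exact_mod_cast Nat.le_succ N)))

lemma contDiff_opL {N : ℕ} (l : List ℝ) {f : ℝ → ℝ} (hf : ContDiff ℝ (N + l.length : ℕ) f) :
    ContDiff ℝ N (opL l f) := by
  induction l generalizing f with
  | nil => exact hf
  | cons a l ih => exact ih (contDiff_deriv_sub hf a)

/-- The operators `∂ - a` commute on sufficiently smooth functions. -/
lemma opL_perm {l l' : List ℝ} (h : l.Perm l') : ∀ {f : ℝ → ℝ},
    ContDiff ℝ (l.length : ℕ) f → opL l f = opL l' f := by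
  induction h with
  | nil => exact fun _ => rfl
  | cons a h ih => exact fun hf => ih (contDiff_deriv_sub hf a)
  | swap a b l =>
    intro f hf
    have h2 : ContDiff ℝ (1 + 1 : ℕ) f := hf.of_le (by simp; norm_cast; omega)
    have hd : Differentiable ℝ f := hf.differentiable (by simp)
    have hdd : Differentiable ℝ (deriv f) := by
      have h3 : ContDiff ℝ ((1 : WithTop ℕ∞) + 1) f := by exact_mod_cast h2
      exact (contDiff_succ_iff_deriv.1 h3).2.2.differentiable (by simp)
    simp only [opL]
    congr 1
    ext s
    have e : ∀ c : ℝ, deriv (fun s => deriv f s - c * f s) s = deriv (deriv f) s - c * deriv f s :=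
      fun c => ((hdd s).hasDerivAt.sub ((hd s).hasDerivAt.const_mul c)).deriv
    rw [e, e]
    ring
  | trans h1 h2 ih1 ih2 =>
    intro f hf
    rw [ih1 hf, ih2 (by rwa [← h1.length_eq])]

/-- The functions `opL [a 0, …, a (j - 1)] v` form a chain. -/
lemma chain_opL {N : ℕ} (a : ℕ → ℝ) {v : ℝ → ℝ} (hv : ContDiff ℝ N v) :
    Chain N a (fun j => opL ((List.range j).map a) v) where
  cont j hj := by
    have h1 : ContDiff ℝ (0 : ℕ) (opL ((List.range j).map a) v) :=
      contDiff_opL _ (hv.of_le (by simpa using hj))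
    exact h1.continuous.continuousOn
  der j hj s _ := by
    have h1 : ContDiff ℝ (1 : ℕ) (opL ((List.range j).map a) v) :=
      contDiff_opL _ (hv.of_le (by simp; norm_cast; omega))
    have h2 := (h1.differentiable (by simp) s).hasDerivAt
    refine h2.congr_deriv ?_
    simp only [List.range_succ, List.map_append, List.map_cons, List.map_nil, opL_append, opL]
    ring

section Laplacian

variable {n : ℕ}

lemma hasFDerivAt_neg_log_norm {y : EuclideanSpace ℝ (Fin n)} (hy : y ≠ 0) :
    HasFDerivAt (fun y : EuclideanSpace ℝ (Fin n) => -Real.log ‖y‖)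
      ((-Real.exp (2 * -Real.log ‖y‖)) • innerSL ℝ y) y := by
  have hn : 0 < ‖y‖ := norm_pos_iff.2 hy
  have h1 := ((hasStrictFDerivAt_norm_sq (F := EuclideanSpace ℝ (Fin n)) y).hasFDerivAt.log
    (pow_pos hn 2).ne').const_mul (-(1 / 2 : ℝ))
  have e1 : Real.exp (2 * -Real.log ‖y‖) = (‖y‖ ^ 2)⁻¹ := by
    rw [mul_neg, Real.exp_neg, two_mul, Real.exp_add, Real.exp_log hn, sq]
  rw [e1]
  refine (h1.congr_fderiv ?_).congr_of_eventuallyEq (Eventually.of_forall fun z => ?_)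
  · ext v
    simp
    ring
  · simp only [Real.log_pow]
    push_cast
    ring

lemma hasFDerivAt_comp_neg_log {W : ℝ → ℝ} {d : ℝ} {y : EuclideanSpace ℝ (Fin n)} (hy : y ≠ 0)
    (hW : HasDerivAt W d (-Real.log ‖y‖)) :
    HasFDerivAt (fun y : EuclideanSpace ℝ (Fin n) => W (-Real.log ‖y‖))
      ((-(d * Real.exp (2 * -Real.log ‖y‖))) • innerSL ℝ y) y := by
  refine (hW.comp_hasFDerivAt y (hasFDerivAt_neg_log_norm hy)).congr_fderiv ?_
  rw [smul_smul, mul_neg]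

/-- The Laplacian of a radial function in the logarithmic variable `s = -log |x|`. -/
lemma lap_radial {w : EuclideanSpace ℝ (Fin n) → ℝ} {W W' : ℝ → ℝ} {d : ℝ}
    {x : EuclideanSpace ℝ (Fin n)} (hx : x ≠ 0)
    (hw : ∀ y, y ≠ 0 → w y = W (-Real.log ‖y‖)) (h1 : ∀ s, HasDerivAt W (W' s) s)
    (h2 : HasDerivAt W' d (-Real.log ‖x‖)) :
    lap w x = Real.exp (2 * -Real.log ‖x‖) * (d - ((n : ℝ) - 2) * W' (-Real.log ‖x‖)) := by
  set H : ℝ → ℝ := fun s => -(W' s * Real.exp (2 * s)) with hH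
  set σ := -Real.log ‖x‖ with hσ
  have hne : ∀ᶠ y in 𝓝 x, y ≠ 0 := isOpen_ne.mem_nhds hx
  have hf : ∀ y, y ≠ 0 → HasFDerivAt w (H (-Real.log ‖y‖) • innerSL ℝ y) y := by
    intro y hy
    refine (hasFDerivAt_comp_neg_log hy (h1 _)).congr_of_eventuallyEq ?_
    filter_upwards [isOpen_ne.mem_nhds hy] with z hz using hw z hz
  have hHd : HasDerivAt H (-((d + 2 * W' σ) * Real.exp (2 * σ))) σ := by
    have h3 : HasDerivAt (fun s : ℝ => Real.exp (2 * s)) (Real.exp (2 * σ) * (2 * 1)) σ :=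
      ((hasDerivAt_id σ).const_mul 2).exp
    exact ((h2.mul h3).neg).congr_deriv (by ring)
  have hc := hasFDerivAt_comp_neg_log hx hHd
  rw [← hσ] at hc
  set e := Real.exp (2 * σ)
  -- The inner product as a linear (rather than conjugate-linear) map into the dual.
  let Q : EuclideanSpace ℝ (Fin n) →L[ℝ] (EuclideanSpace ℝ (Fin n) →L[ℝ] ℝ) :=
    LinearMap.toContinuousLinearMap
      { toFun := fun y => innerSL ℝ y
        map_add' := map_add _
        map_smul' := fun c y => by ext v; simp }
  have hQ : ∀ y, Q y = innerSL ℝ y := fun _ => rfl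
  have hff : HasFDerivAt (fderiv ℝ w) (H σ • Q +
      (((-(-((d + 2 * W' σ) * e) * e)) • innerSL ℝ x).smulRight (innerSL ℝ x))) x := by
    have h4 := hc.smul Q.hasFDerivAt
    refine h4.congr_of_eventuallyEq ?_
    filter_upwards [hne] with y hy using (hf y hy).fderiv
  have hee : e * ‖x‖ ^ 2 = 1 := by
    have hn : 0 < ‖x‖ := norm_pos_iff.2 hx
    have : e = (‖x‖ ^ 2)⁻¹ := by
      rw [show e = Real.exp (2 * -Real.log ‖x‖) from rfl, mul_neg, Real.exp_neg, two_mul,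
        Real.exp_add, Real.exp_log hn, sq]
    rw [this]
    exact inv_mul_cancel₀ (by positivity)
  have hterm : ∀ i : Fin n, iteratedFDeriv ℝ 2 w x (fun _ => EuclideanSpace.single i 1) =
      H σ + (d + 2 * W' σ) * e * e * (x i) ^ 2 := by
    intro i
    rw [iteratedFDeriv_two_apply, hff.fderiv]
    simp [hQ, EuclideanSpace.inner_single_right]
    ring
  have hsum : ∑ i : Fin n, (x i) ^ 2 = ‖x‖ ^ 2 := (EuclideanSpace.real_norm_sq_eq x).symm
  rw [lap, Finset.sum_congr rfl fun i _ => hterm i, Finset.sum_add_distrib, ← Finset.mul_sum, hsum,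
    Finset.sum_const, Finset.card_univ, Fintype.card_fin, nsmul_eq_mul]
  have hHσ : H σ = -(W' σ * e) := rfl
  rw [hHσ]
  linear_combination (d + 2 * W' σ) * e * hee

end Laplacian

/-! ### Radial functions in the logarithmic variable -/

/-- Two chains over the same base function are related by a universal triangular matrix. -/
lemma exists_chain_coeffs (a a' : ℕ → ℝ) (N : ℕ) : ∀ j ≤ N, ∃ c : ℕ → ℝ,
    ∀ D D' : ℕ → ℝ → ℝ, Chain N a D → Chain N a' D' → D 0 = D' 0 →
      ∀ s, 0 ≤ s → D' j s = ∑ i ∈ Finset.range (j + 1), c i * D i s := by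
  intro j
  induction j with
  | zero => exact fun _ => ⟨fun _ => 1, fun D D' _ _ h0 s _ => by simp [h0]⟩
  | succ j ih =>
    intro hj
    obtain ⟨c, hc⟩ := ih (by omega)
    refine ⟨fun i => (if i < j + 1 then c i * (a i - a' j) else 0) +
      (if i = 0 then 0 else c (i - 1)), fun D D' h h' h0 => ?_⟩
    have hpos : ∀ s ∈ Set.Ioi (0 : ℝ), D' (j + 1) s = ∑ i ∈ Finset.range (j + 1 + 1),
        ((if i < j + 1 then c i * (a i - a' j) else 0) +
          (if i = 0 then 0 else c (i - 1))) * D i s := by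
      intro s hs
      have hs : 0 < s := hs
      have h1 : HasDerivAt (fun s => ∑ i ∈ Finset.range (j + 1), c i * D i s)
          (∑ i ∈ Finset.range (j + 1), c i * (a i * D i s + D (i + 1) s)) s :=
        HasDerivAt.fun_sum fun i hi =>
          (h.der i (by have := Finset.mem_range.1 hi; omega) s hs).const_mul _
      have h2 := (h'.der j (by omega) s hs).congr_of_eventuallyEq (f₁ := fun s =>
        ∑ i ∈ Finset.range (j + 1), c i * D i s) (by
          filter_upwards [Ioi_mem_nhds hs] with t ht using (hc D D' h h' h0 t (le_of_lt ht)).symm)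
      have h3 := h2.unique h1
      have h4 := hc D D' h h' h0 s hs.le
      simp only [add_mul, Finset.sum_add_distrib]
      rw [Finset.sum_range_succ (fun i => (if i < j + 1 then c i * (a i - a' j) else 0) * D i s),
        Finset.sum_range_succ' (fun i => (if i = 0 then 0 else c (i - 1)) * D i s)]
      have h5 : ∑ i ∈ Finset.range (j + 1), (if i < j + 1 then c i * (a i - a' j) else 0) * D i s =
          ∑ i ∈ Finset.range (j + 1), c i * (a i * D i s) -
            a' j * ∑ i ∈ Finset.range (j + 1), c i * D i s := by
        rw [Finset.mul_sum, ← Finset.sum_sub_distrib]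
        refine Finset.sum_congr rfl fun i hi => ?_
        rw [if_pos (Finset.mem_range.1 hi)]
        ring
      rw [h5, ← h4]
      simp only [mul_add, Finset.sum_add_distrib] at h3
      simp
      linarith
    -- The identity extends to the endpoint by continuity.
    refine Set.EqOn.of_subset_closure (s := Set.Ioi (0 : ℝ)) (t := Set.Ici 0) hpos
      (h'.cont (j + 1) hj) ?_ Set.Ioi_subset_Ici_self (by rw [closure_Ioi])
    exact continuousOn_finsetSum _ fun i hi =>
      continuousOn_const.mul (h.cont i (by have := Finset.mem_range.1 hi; omega))

section Radial

variable {n k : ℕ} {m : ℝ}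

/-- Iterated Laplacians of `u(y) = e^{ms} v(s)`, `s = -log ‖y‖`, as products of first-order operators:
the factor `Δ` acting on `e^{(m+2j)s}` contributes `∂ + (m+2j)` and `∂ - (m+2(k-1-j))`. -/
lemma iterLap_radial {u : EuclideanSpace ℝ (Fin n) → ℝ} {v : ℝ → ℝ}
    (hn : (n : ℝ) = 2 * m + 2 * k) (hv : ContDiff ℝ (2 * k : ℕ) v)
    (hu : ∀ y, y ≠ 0 → u y = Real.exp (m * -Real.log ‖y‖) * v (-Real.log ‖y‖)) :
    ∀ j ≤ k, ∀ y, y ≠ 0 → iterLap j u y = Real.exp ((m + 2 * j) * -Real.log ‖y‖) *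
      opL ((List.range j).flatMap fun i : ℕ => [-(m + 2 * i), m + 2 * ((k : ℝ) - 1 - i)]) v
        (-Real.log ‖y‖) := by
  intro j
  induction j with
  | zero => intro _ y hy; simpa [iterLap, opL] using hu y hy
  | succ j ih =>
    intro hj x hx
    have ih := ih (by omega)
    set l := (List.range j).flatMap fun i : ℕ => [-(m + 2 * i), m + 2 * ((k : ℝ) - 1 - i)] with hl
    have hlen : l.length = 2 * j := by
      simp [hl, List.length_flatMap, mul_comm]
    set Z := opL l v with hZ
    have hZc : ContDiff ℝ (1 + 1 : ℕ) Z :=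
      contDiff_opL l (hv.of_le (by rw [hlen]; norm_cast; omega))
    set b := m + 2 * (j : ℝ) with hb
    have hg : ContDiff ℝ (1 : ℕ) (fun s => deriv Z s - -b * Z s) := contDiff_deriv_sub hZc (-b)
    set g := fun s => deriv Z s - -b * Z s with hgdef
    have hZd : ∀ s, HasDerivAt Z (g s - b * Z s) s := fun s =>
      (hZc.differentiable (by simp) s).hasDerivAt.congr_deriv (by simp [hgdef])
    have hgd : ∀ s, HasDerivAt g (deriv g s) s := fun s =>
      (hg.differentiable (by simp) s).hasDerivAt
    have hexp : ∀ s, HasDerivAt (fun s => Real.exp (b * s)) (Real.exp (b * s) * (b * 1)) s :=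
      fun s => ((hasDerivAt_id s).const_mul b).exp
    have key := lap_radial (w := iterLap j u) (W := fun s => Real.exp (b * s) * Z s)
      (W' := fun s => Real.exp (b * s) * g s) hx ih
      (fun s => ((hexp s).mul (hZd s)).congr_deriv (by ring)) ((hexp _).mul (hgd _))
    have e1 : iterLap (j + 1) u x = lap (iterLap j u) x := by
      simp only [iterLap, Function.iterate_succ_apply']
    have e2 : opL ((List.range (j + 1)).flatMap fun i : ℕ =>
        [-(m + 2 * i), m + 2 * ((k : ℝ) - 1 - i)]) v =
        fun s => deriv g s - (m + 2 * ((k : ℝ) - 1 - j)) * g s := by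
      rw [List.range_succ, List.flatMap_append, opL_append]
      rfl
    rw [e1, key, e2]
    have e3 : Real.exp ((m + 2 * ((j + 1 : ℕ) : ℝ)) * -Real.log ‖x‖) =
        Real.exp (2 * -Real.log ‖x‖) * Real.exp (b * -Real.log ‖x‖) := by
      rw [← Real.exp_add, hb]; push_cast; ring_nf
    rw [e3, hn]
    ring

/-- The exponents of the chain: `-m, -(m+2), …, -(m+2k-2)` followed by `m+2k-2, …, m+2, m`. -/
def expo (m : ℝ) (k j : ℕ) : ℝ :=
  if j < k then -(m + 2 * j) else m + 2 * (2 * (k : ℝ) - 1 - j)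

lemma flatMap_perm_expo (m : ℝ) (k : ℕ) :
    ((List.range k).flatMap fun i : ℕ => [-(m + 2 * i), m + 2 * ((k : ℝ) - 1 - i)]).Perm
      ((List.range (2 * k)).map (expo m k)) := by
  have h1 := (List.map_append_flatMap_perm (List.range k) (fun i : ℕ => -(m + 2 * (i : ℝ)))
    (fun i => [m + 2 * ((k : ℝ) - 1 - i)])).symm
  refine h1.trans (List.Perm.of_eq ?_)
  rw [two_mul, List.range_add, List.map_append, List.map_map, ← List.map_eq_flatMap]
  congr 1
  · refine List.map_congr_left fun i hi => ?_
    rw [expo, if_pos (List.mem_range.1 hi)]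
  · refine List.map_congr_left fun i hi => ?_
    simp only [Function.comp_apply, expo]
    rw [if_neg (by omega)]
    push_cast
    ring

variable (u : EuclideanSpace ℝ (Fin n) → ℝ) (e : EuclideanSpace ℝ (Fin n))

/-- The radial profile of `u` along the direction `e`. -/
def profile (r : ℝ) : ℝ := u (r • e)

/-- The weighted derivatives of the radial profile in the logarithmic variable. -/
def wder (m : ℝ) (j : ℕ) (s : ℝ) : ℝ :=
  (-1) ^ j * (Real.exp (-((m + j) * s)) * iteratedDeriv j (profile u e) (Real.exp (-s)))

variable {u e}

lemma contDiff_profile {N : ℕ} (hu : ContDiff ℝ N u) : ContDiff ℝ N (profile u e) :=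
  hu.comp (contDiff_id.smul contDiff_const)

lemma eq_profile (he : ‖e‖ = 1) (hrad : ∀ x y, ‖x‖ = ‖y‖ → u x = u y)
    (x : EuclideanSpace ℝ (Fin n)) : u x = profile u e ‖x‖ :=
  hrad _ _ (by rw [norm_smul, he, norm_norm, mul_one])

lemma iteratedDeriv_profile {N j : ℕ} (hu : ContDiff ℝ N u) (hj : j ≤ N) (r : ℝ) :
    iteratedDeriv j (profile u e) r = iteratedFDeriv ℝ j u (r • e) (fun _ => e) := by
  have h := (ContinuousLinearMap.toSpanSingleton ℝ e).iteratedFDeriv_comp_right hu r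
    (i := j) (by exact_mod_cast hj)
  rw [iteratedDeriv_eq_iteratedFDeriv]
  have h2 : profile u e = u ∘ (ContinuousLinearMap.toSpanSingleton ℝ e) := by
    ext r; simp [profile]
  rw [h2, h]
  simp

lemma continuous_iteratedDeriv_profile {N j : ℕ} (hu : ContDiff ℝ N u) (hj : j ≤ N) :
    Continuous (iteratedDeriv j (profile u e)) :=
  (contDiff_profile hu).continuous_iteratedDeriv j (by exact_mod_cast hj)

/-- The weighted radial derivatives form a chain, with the exponents `-m, -(m+1), …`. -/
lemma chain_wder {N : ℕ} (hu : ContDiff ℝ N u) :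
    Chain N (fun j => -(m + j)) (wder u e m) where
  cont j hj := by
    have h := continuous_iteratedDeriv_profile (e := e) hu hj
    unfold wder
    exact (by fun_prop : Continuous _).continuousOn
  der j hj s _ := by
    have h1 : HasDerivAt (iteratedDeriv j (profile u e))
        (iteratedDeriv (j + 1) (profile u e) (Real.exp (-s))) (Real.exp (-s)) := by
      rw [iteratedDeriv_succ]
      exact ((contDiff_profile hu).differentiable_iteratedDeriv j
        (by exact_mod_cast hj) _).hasDerivAt
    have h2 : HasDerivAt (fun s : ℝ => Real.exp (-s)) (Real.exp (-s) * -1) s :=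
      (hasDerivAt_neg s).exp
    have h3 : HasDerivAt (fun s : ℝ => Real.exp (-((m + j) * s)))
        (Real.exp (-((m + j) * s)) * -((m + j) * 1)) s :=
      ((hasDerivAt_id s).const_mul (m + j)).neg.exp
    have h4 : Real.exp (-((m + (j + 1 : ℕ)) * s)) = Real.exp (-((m + j) * s)) * Real.exp (-s) := by
      rw [← Real.exp_add]; push_cast; ring_nf
    refine ((h3.mul (h1.comp s h2)).const_mul ((-1 : ℝ) ^ j)).congr_deriv ?_
    simp only [wder, h4, pow_succ, Function.comp_apply]
    ring

lemma contDiff_wder_zero {N : ℕ} (hu : ContDiff ℝ N u) : ContDiff ℝ N (wder u e m 0) := by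
  have h := contDiff_profile (e := e) hu
  have h1 : wder u e m 0 = fun s => Real.exp (-(m * s)) * profile u e (Real.exp (-s)) := by
    ext s; simp [wder]
  rw [h1]
  fun_prop

lemma wder_zero_eq_zero {N j : ℕ} (hu : ContDiff ℝ N u) (hj : j ≤ N)
    (h : iteratedFDeriv ℝ j u e (fun _ => e) = 0) : wder u e m j 0 = 0 := by
  simp [wder, iteratedDeriv_profile hu hj, h]

/-- The energy of `u` in the logarithmic variable. -/
lemma energy_bound {p : ℝ} (hn : 0 < n) (he : ‖e‖ = 1) (hrad : ∀ x y, ‖x‖ = ‖y‖ → u x = u y)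
    (hu : Continuous u) (hp : 0 < p) (hm : m * p = n) {T : ℝ} :
    (∫ s in Set.Ioc 0 T, |wder u e m 0 s| ^ p) ≤
      (∫ x in ball (0 : EuclideanSpace ℝ (Fin n)) 1, |u x| ^ p) /
        (n * volume.real (ball (0 : EuclideanSpace ℝ (Fin n)) 1)) := by
  have : NeZero n := ⟨hn.ne'⟩
  have hf : Continuous (profile u e) := by unfold profile; fun_prop
  set G : ℝ → ℝ := fun r => r ^ (n - 1) * |profile u e r| ^ p with hG
  have hGc : Continuous G := by
    have : Continuous fun r => |profile u e r| ^ p :=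
      (continuous_abs.comp hf).rpow_const fun _ => Or.inr hp.le
    exact (continuous_pow _).mul this
  have hpos : 0 < (n : ℝ) * volume.real (ball (0 : EuclideanSpace ℝ (Fin n)) 1) :=
    mul_pos (by exact_mod_cast hn)
      (ENNReal.toReal_pos (measure_ball_pos _ _ one_pos).ne' measure_ball_lt_top.ne)
  have h1 : ∫ x in ball (0 : EuclideanSpace ℝ (Fin n)) 1, |u x| ^ p =
      n * volume.real (ball (0 : EuclideanSpace ℝ (Fin n)) 1) * ∫ r in Set.Ioo 0 1, G r := by
    have h2 := integral_fun_norm_addHaar (volume : Measure (EuclideanSpace ℝ (Fin n)))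
      ((Set.Iio (1 : ℝ)).indicator fun r => |profile u e r| ^ p)
    have h3 : ∫ x in ball (0 : EuclideanSpace ℝ (Fin n)) 1, |u x| ^ p =
        ∫ x : EuclideanSpace ℝ (Fin n),
          ((Set.Iio (1 : ℝ)).indicator fun r => |profile u e r| ^ p) ‖x‖ := by
      rw [← integral_indicator measurableSet_ball]
      congr 1
      ext x
      simp only [Set.indicator, mem_ball_zero_iff, Set.mem_Iio, ← eq_profile he hrad]
    rw [h3, h2, finrank_euclideanSpace_fin, ← Set.Ioi_inter_Iio,
      ← setIntegral_indicator measurableSet_Iio, nsmul_eq_mul, smul_eq_mul, mul_assoc]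
    congr 3
    ext r
    by_cases hr : r < 1 <;> simp [Set.indicator, hr, hG]
  have h4 := integral_image_eq_integral_abs_deriv_smul (s := Set.Ioc 0 T)
    (f := fun s => Real.exp (-s)) (f' := fun s => -Real.exp (-s)) measurableSet_Ioc
    (fun s _ => by simpa using ((hasDerivAt_neg s).exp).hasDerivWithinAt)
    (fun a _ b _ hab => by simpa using hab) G
  have h5 : ∫ s in Set.Ioc 0 T, |wder u e m 0 s| ^ p =
      ∫ r in (fun s => Real.exp (-s)) '' Set.Ioc 0 T, G r := by
    rw [h4]
    congr 1
    ext s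
    simp only [wder, hG, smul_eq_mul, abs_neg, Real.abs_exp, abs_mul, pow_zero, iteratedDeriv_zero,
      one_mul]
    rw [Real.mul_rpow (Real.exp_pos _).le (abs_nonneg _), ← Real.exp_mul, ← mul_assoc,
      ← pow_succ', Nat.sub_add_cancel hn, ← Real.exp_nat_mul, ← hm]
    congr 2
    push_cast
    ring
  rw [h5, h1, mul_div_cancel_left₀ _ hpos.ne']
  refine setIntegral_mono_set ?_ ?_ (LE.le.eventuallyLE ?_)
  · exact (hGc.integrableOn_Icc (a := 0) (b := 1)).mono_set Set.Ioo_subset_Icc_self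
  · filter_upwards [ae_restrict_mem measurableSet_Ioo] with r hr
    have := hr.1
    simp only [hG, Pi.zero_apply]
    positivity
  · rintro _ ⟨s, hs, rfl⟩
    exact ⟨Real.exp_pos _, by simpa using hs.1⟩

end Radial

/-! ### The blow-up sequence -/

section Setup

variable {n k : ℕ} {M : ℝ} {lam : ℕ → ℝ} {u : ℕ → EuclideanSpace ℝ (Fin n) → ℝ}
  {e : EuclideanSpace ℝ (Fin n)}

/-- The blow-up sequence in logarithmic coordinates `s = -log r`, with `v(s) = e^{-ms} u(e^{-s})`
and `m = (n-2k)/2`, is a sequence of chains to which the decay theorem applies. -/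
lemma chainSeq_of_setup (hk : 0 < k) (hn : 2 * k < n) (h : BlowUpSetup n k M lam u)
    (he : ‖e‖ = 1) {m : ℝ} (hm : (n : ℝ) = 2 * m + 2 * k) :
    ∃ B : ℝ, ChainSeq k (expo m k) (twoStar n k - 2) B lam
      (fun i s => lam i * Real.exp (-(2 * k * s)))
      (fun i j => opL ((List.range j).map (expo m k)) (wder (u i) e m 0)) := by
  obtain ⟨hlam, hlim, hC, hrad, heq, hdir, -, hen⟩ := h
  have hm0 : 0 < m := by
    have : (2 * k : ℝ) < n := by exact_mod_cast hn
    linarith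
  have hts : twoStar n k = n / m := by
    have : (n : ℝ) - 2 * k = 2 * m := by linarith
    rw [twoStar, this]
    field_simp
  have hmts : m * twoStar n k = n := by rw [hts]; field_simp
  have hts0 : 0 < twoStar n k := by
    rw [hts]
    exact div_pos (by exact_mod_cast (by omega : 0 < n)) hm0
  have hv : ∀ i, ContDiff ℝ (2 * k : ℕ) (wder (u i) e m 0) := fun i => contDiff_wder_zero (hC i)
  have hch : ∀ i, Chain (2 * k) (expo m k)
      (fun j => opL ((List.range j).map (expo m k)) (wder (u i) e m 0)) :=
    fun i => chain_opL _ (hv i)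
  refine ⟨M ^ twoStar n k / (n * volume.real (ball (0 : EuclideanSpace ℝ (Fin n)) 1)),
    hch, hlim, fun i s hs => ?_, fun i => ?_, fun i j hj => ?_, fun i T _ => ?_⟩
  · rw [abs_mul, abs_of_pos (hlam i), Real.abs_exp]
    exact mul_le_of_le_one_right (hlam i).le (Real.exp_le_one_iff.2 (by
      have : 0 ≤ 2 * (k : ℝ) * s := by positivity
      linarith))
  · have hpos : ∀ s ∈ Set.Ioi (0 : ℝ),
        opL ((List.range (2 * k)).map (expo m k)) (wder (u i) e m 0) s =
          lam i * Real.exp (-(2 * k * s)) * wder (u i) e m 0 s +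
            |wder (u i) e m 0 s| ^ (twoStar n k - 2) * wder (u i) e m 0 s := by
      intro s hs
      have hs : 0 < s := hs
      have hy : ‖Real.exp (-s) • e‖ = Real.exp (-s) := by
        rw [norm_smul, he, Real.norm_eq_abs, Real.abs_exp, mul_one]
      have hy0 : Real.exp (-s) • e ≠ 0 := norm_pos_iff.1 (by rw [hy]; exact Real.exp_pos _)
      have hlog : -Real.log ‖Real.exp (-s) • e‖ = s := by rw [hy, Real.log_exp, neg_neg]
      have huv : ∀ y, y ≠ 0 → u i y =
          Real.exp (m * -Real.log ‖y‖) * wder (u i) e m 0 (-Real.log ‖y‖) := by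
        intro y hy
        have hy' : 0 < ‖y‖ := norm_pos_iff.2 hy
        rw [eq_profile he (hrad i) y]
        simp only [wder, pow_zero, one_mul, iteratedDeriv_zero, neg_neg, Real.exp_log hy',
          Nat.cast_zero, add_zero]
        rw [← mul_assoc, ← Real.exp_add, add_neg_cancel, Real.exp_zero, one_mul]
      have h1 := iterLap_radial hm (hv i) huv k le_rfl _ hy0
      have h2 := huv _ hy0
      rw [hlog] at h1 h2
      rw [opL_perm (flatMap_perm_expo m k) ((hv i).of_le (by
        rw [(flatMap_perm_expo m k).length_eq]; simp))] at h1
      have h3 := heq i (Real.exp (-s) • e) (by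
        rw [mem_ball_zero_iff, hy]; exact Real.exp_lt_one_iff.2 (by linarith))
      set V := wder (u i) e m 0 s
      have h4 : |u i (Real.exp (-s) • e)| ^ (twoStar n k - 2) =
          Real.exp (2 * k * s) * |V| ^ (twoStar n k - 2) := by
        rw [h2, abs_mul, Real.abs_exp, Real.mul_rpow (Real.exp_pos _).le (abs_nonneg _),
          ← Real.exp_mul]
        congr 2
        linear_combination s * hmts + s * hm
      rw [h4, h1, h2] at h3
      have h5 : Real.exp ((m + 2 * k) * s) = Real.exp (2 * k * s) * Real.exp (m * s) := by
        rw [← Real.exp_add]; ring_nf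
      have h6 : Real.exp (-(2 * k * s)) * Real.exp (2 * k * s) = 1 := by
        rw [← Real.exp_add, neg_add_cancel, Real.exp_zero]
      rw [h5] at h3
      have h7 : Real.exp (2 * k * s) * Real.exp (m * s) ≠ 0 := by positivity
      refine mul_left_cancel₀ h7 ?_
      linear_combination h3 - lam i * V * Real.exp (m * s) * h6
    have hc : Continuous (wder (u i) e m 0) := (hv i).continuous
    have hq : 0 ≤ twoStar n k - 2 := by
      have : 2 ≤ twoStar n k := by
        rw [hts, le_div_iff₀ hm0, hm]
        have : (0 : ℝ) ≤ k := by positivity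
        linarith
      linarith
    have hcont : Continuous fun s => lam i * Real.exp (-(2 * k * s)) * wder (u i) e m 0 s +
        |wder (u i) e m 0 s| ^ (twoStar n k - 2) * wder (u i) e m 0 s := by
      have : Continuous fun s => |wder (u i) e m 0 s| ^ (twoStar n k - 2) :=
        (continuous_abs.comp hc).rpow_const fun _ => Or.inr hq
      fun_prop
    -- At `s = 0` the equation holds by continuity.
    exact fun s hs => Set.EqOn.of_subset_closure (s := Set.Ioi (0 : ℝ)) (t := Set.Ici 0) hpos
      ((hch i).cont (2 * k) le_rfl) hcont.continuousOn Set.Ioi_subset_Ici_self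
      (by rw [closure_Ioi]) hs
  · obtain ⟨c, hc⟩ := exists_chain_coeffs (fun j => -(m + j)) (expo m k) (2 * k) j (by omega)
    rw [hc _ _ (chain_wder (hC i)) (hch i) rfl 0 le_rfl]
    refine Finset.sum_eq_zero fun l hl => ?_
    have := Finset.mem_range.1 hl
    rw [wder_zero_eq_zero (hC i) (by omega) (hdir i e he l (by omega)), mul_zero]
  · have h1 := energy_bound (e := e) (T := T) (by omega) he (hrad i) (hC i).continuous hts0 hmts
    rw [sub_add_cancel]
    exact h1.trans (by gcongr; exact hen i)

/-- The radial derivatives of the sequence decay uniformly away from the origin. -/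
lemma profile_tendsto_zero (hk : 0 < k) (hn : 2 * k < n) (h : BlowUpSetup n k M lam u)
    (he : ‖e‖ = 1) {T : ℝ} (hT : 0 ≤ T) {ε : ℝ} (hε : 0 < ε) :
    ∀ᶠ i in atTop, ∀ j ≤ 2 * k, ∀ s ∈ Set.Icc 0 T,
      |iteratedDeriv j (profile (u i) e) (Real.exp (-s))| ≤ ε := by
  obtain ⟨m, hm⟩ : ∃ m : ℝ, (n : ℝ) = 2 * m + 2 * k := ⟨((n : ℝ) - 2 * k) / 2, by ring⟩
  have hm0 : 0 < m := by
    have : (2 * k : ℝ) < n := by exact_mod_cast hn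
    linarith
  have hkR : (0 : ℝ) < k := by exact_mod_cast hk
  have hq : 0 < twoStar n k - 2 := by
    have h1 : (n : ℝ) - 2 * k = 2 * m := by linarith
    rw [twoStar, h1, sub_pos, lt_div_iff₀ (by linarith)]
    linarith
  obtain ⟨B, hB⟩ := chainSeq_of_setup hk hn h he hm
  have hC := h.2.2.1
  choose! c hc using exists_chain_coeffs (expo m k) (fun j => -(m + j)) (2 * k)
  -- A common bound for the change of basis between the two chains.
  set A : ℝ := ∑ j ∈ Finset.range (2 * k + 1), ∑ l ∈ Finset.range (j + 1), |c j l| with hA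
  have hA0 : 0 ≤ A := Finset.sum_nonneg fun _ _ => Finset.sum_nonneg fun _ _ => abs_nonneg _
  set W := Real.exp ((m + 2 * k) * T) with hW
  have hW0 : 0 < W := Real.exp_pos _
  have hev := hB.tendsto_zero hk hq hm0
    (fun j hj => by
      rw [expo, if_pos hj]
      have : (0 : ℝ) ≤ j := by positivity
      linarith)
    (fun j hj => by
      rw [expo, expo, if_pos hj, if_neg (by omega), Nat.cast_sub (by omega),
        Nat.cast_sub (by omega)]
      push_cast
      ring) hT (ε := ε / ((A + 1) * W)) (by positivity)
  filter_upwards [hev] with i hi j hj s hs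
  have h1 := hc j hj _ _ (hB.chain i) (chain_wder (u := u i) (e := e) (m := m) (hC i)) rfl s hs.1
  have h2 : |wder (u i) e m j s| ≤ A * (ε / ((A + 1) * W)) := by
    rw [h1]
    calc _ ≤ ∑ l ∈ Finset.range (j + 1), |c j l| * (ε / ((A + 1) * W)) := by
          refine (Finset.abs_sum_le_sum_abs _ _).trans (Finset.sum_le_sum fun l hl => ?_)
          rw [abs_mul]
          have := Finset.mem_range.1 hl
          exact mul_le_mul_of_nonneg_left (hi l (by omega) s hs) (abs_nonneg _)
      _ = (∑ l ∈ Finset.range (j + 1), |c j l|) * (ε / ((A + 1) * W)) := by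
          rw [Finset.sum_mul]
      _ ≤ _ := by
          refine mul_le_mul_of_nonneg_right ?_ (by positivity)
          exact Finset.single_le_sum (f := fun j => ∑ l ∈ Finset.range (j + 1), |c j l|)
            (fun _ _ => Finset.sum_nonneg fun _ _ => abs_nonneg _)
            (Finset.mem_range.2 (by omega))
  have h3 : |iteratedDeriv j (profile (u i) e) (Real.exp (-s))| =
      Real.exp ((m + j) * s) * |wder (u i) e m j s| := by
    rw [wder, abs_mul, abs_pow, abs_neg, abs_one, one_pow, one_mul, abs_mul, Real.abs_exp,
      ← mul_assoc, ← Real.exp_add, add_neg_cancel, Real.exp_zero, one_mul]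
  have h4 : Real.exp ((m + j) * s) ≤ W := by
    refine Real.exp_le_exp.2 (mul_le_mul ?_ hs.2 hs.1 (by positivity))
    have : (j : ℝ) ≤ 2 * k := by exact_mod_cast hj
    linarith
  rw [h3]
  calc _ ≤ W * (A * (ε / ((A + 1) * W))) :=
        mul_le_mul h4 h2 (abs_nonneg _) hW0.le
    _ = A / (A + 1) * ε := by field_simp
    _ ≤ 1 * ε := by
        gcongr
        rw [div_le_one (by positivity)]
        linarith
    _ = ε := one_mul ε

/-- Derivatives of a radial function are controlled by those of its profile, away from the
origin. -/
lemma norm_iteratedFDeriv_radial_le {w : EuclideanSpace ℝ (Fin n) → ℝ} {N : ℕ}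
    (hw : ContDiff ℝ N w) (hrad : ∀ x y, ‖x‖ = ‖y‖ → w x = w y) (he : ‖e‖ = 1)
    {x : EuclideanSpace ℝ (Fin n)} (hx : x ≠ 0) {j : ℕ} (hj : j ≤ N) {C D : ℝ}
    (hC : ∀ l ≤ j, |iteratedDeriv l (profile w e) ‖x‖| ≤ C)
    (hD : ∀ l, 1 ≤ l → l ≤ j →
      ‖iteratedFDeriv ℝ l (fun y : EuclideanSpace ℝ (Fin n) => ‖y‖) x‖ ≤ D ^ l) :
    ‖iteratedFDeriv ℝ j w x‖ ≤ j.factorial * C * D ^ j := by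
  have hopen : IsOpen ({0}ᶜ : Set (EuclideanSpace ℝ (Fin n))) := isOpen_compl_singleton
  have hcomp : w = profile w e ∘ fun y => ‖y‖ := funext fun y => eq_profile he hrad y
  have hnorm : ContDiffOn ℝ N (fun y : EuclideanSpace ℝ (Fin n) => ‖y‖) {0}ᶜ :=
    fun y hy => (contDiffAt_norm ℝ hy).contDiffWithinAt
  have h := norm_iteratedFDerivWithin_comp_le (g := profile w e) (n := j) (t := Set.univ)
    (contDiff_profile hw).contDiffOn hnorm (by exact_mod_cast hj) uniqueDiffOn_univ
    hopen.uniqueDiffOn (Set.mapsTo_univ _ _) hx (C := C) (D := D)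
    (fun l hl => by
      rw [iteratedFDerivWithin_univ, norm_iteratedFDeriv_eq_norm_iteratedDeriv]
      exact hC l hl)
    (fun l hl hl' => by
      rw [iteratedFDerivWithin_of_isOpen l hopen hx]
      exact hD l hl hl')
  rw [iteratedFDerivWithin_of_isOpen j hopen hx, ← hcomp] at h
  exact h

end Setup

theorem stmt4 (n k : ℕ) (hk : 2 ≤ 2 * k) (hn : 2 * k < n) (M : ℝ) (hM : 0 < M)
    (lam : ℕ → ℝ) (u : ℕ → EuclideanSpace ℝ (Fin n) → ℝ)
    (hsetup : BlowUpSetup n k M lam u) :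
    ∀ K : Set (EuclideanSpace ℝ (Fin n)),
      K ⊆ Metric.closedBall (0 : EuclideanSpace ℝ (Fin n)) 1 \ {0} → IsCompact K →
      ∀ j ≤ 2 * k,
        Filter.Tendsto
          (fun i => ⨆ x : K, ‖iteratedFDeriv ℝ j (u i) (x : EuclideanSpace ℝ (Fin n))‖)
          Filter.atTop (nhds 0) := by

  intro K hK hKc j hj
  have hk0 : 0 < k := by omega
  set e : EuclideanSpace ℝ (Fin n) := EuclideanSpace.single ⟨0, by omega⟩ 1 with he'
  have he : ‖e‖ = 1 := by simp [he']
  have hC := hsetup.2.2.1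
  have hrad := hsetup.2.2.2.1
  have hne : ∀ x ∈ K, x ≠ 0 := fun x hx => (hK hx).2
  have hle : ∀ x ∈ K, ‖x‖ ≤ 1 := fun x hx => mem_closedBall_zero_iff.1 (hK hx).1
  -- `K` lies in an annulus `e^{-T} ≤ ‖x‖ ≤ 1`.
  obtain ⟨T, hT0, hT⟩ : ∃ T : ℝ, 0 ≤ T ∧ ∀ x ∈ K, -Real.log ‖x‖ ≤ T := by
    have hcont : ContinuousOn (fun x : EuclideanSpace ℝ (Fin n) => -Real.log ‖x‖) K :=
      (continuous_norm.continuousOn.log fun x hx => norm_ne_zero_iff.2 (hne x hx)).neg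
    obtain ⟨T, hT⟩ := hKc.bddAbove_image hcont
    exact ⟨max T 0, le_max_right _ _, fun x hx =>
      (hT (Set.mem_image_of_mem _ hx)).trans (le_max_left _ _)⟩
  -- The derivatives of the norm are bounded on `K`.
  obtain ⟨D, hD1, hD⟩ : ∃ D : ℝ, 1 ≤ D ∧ ∀ l ≤ j, ∀ x ∈ K,
      ‖iteratedFDeriv ℝ l (fun y : EuclideanSpace ℝ (Fin n) => ‖y‖) x‖ ≤ D := by
    have hb : ∀ l, ∃ C : ℝ, ∀ x ∈ K,
        ‖iteratedFDeriv ℝ l (fun y : EuclideanSpace ℝ (Fin n) => ‖y‖) x‖ ≤ C := by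
      intro l
      have hc : ContinuousOn (iteratedFDeriv ℝ l (fun y : EuclideanSpace ℝ (Fin n) => ‖y‖)) K :=
        fun x hx => ((contDiffAt_norm (n := l) ℝ (hne x hx)).continuousAt_iteratedFDeriv
          le_rfl).continuousWithinAt
      exact hKc.exists_bound_of_continuousOn hc
    choose C hC using hb
    refine ⟨1 + ∑ l ∈ Finset.range (j + 1), |C l|, ?_, fun l hl x hx => ?_⟩
    · have : 0 ≤ ∑ l ∈ Finset.range (j + 1), |C l| := Finset.sum_nonneg fun _ _ => abs_nonneg _
      linarith
    · have h1 := Finset.single_le_sum (f := fun l => |C l|) (fun _ _ => abs_nonneg _)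
        (Finset.mem_range.2 (by omega : l < j + 1))
      linarith [hC l x hx, le_abs_self (C l)]
  have hD0 : 0 < D := by linarith
  rw [Metric.tendsto_atTop']
  intro ε hε
  set δ : ℝ := ε / 2 / (j.factorial * D ^ j) with hδ
  have hfac : 0 < (j.factorial : ℝ) := by exact_mod_cast j.factorial_pos
  have hδ0 : 0 < δ := by positivity
  have hev := profile_tendsto_zero hk0 hn hsetup he hT0 hδ0
  obtain ⟨N, hN⟩ := eventually_atTop.1 hev
  refine ⟨N, fun i hi => ?_⟩
  have hbound : ∀ x : K, ‖iteratedFDeriv ℝ j (u i) (x : EuclideanSpace ℝ (Fin n))‖ ≤ ε / 2 := by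
    rintro ⟨x, hx⟩
    have hx0 : 0 < ‖x‖ := norm_pos_iff.2 (hne x hx)
    have h1 := norm_iteratedFDeriv_radial_le (hC i) (hrad i) he (hne x hx) hj (C := δ) (D := D)
      (fun l hl => by
        have h2 := hN i hi.le l (hl.trans hj) (-Real.log ‖x‖)
          ⟨by linarith [Real.log_nonpos hx0.le (hle x hx)], hT x hx⟩
        rwa [neg_neg, Real.exp_log hx0] at h2)
      (fun l hl hl' => (hD l hl' x hx).trans (le_self_pow₀ hD1 (by omega)))
    refine h1.trans (le_of_eq ?_)
    rw [hδ]
    field_simp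
  rw [Real.dist_eq, sub_zero, abs_of_nonneg (Real.iSup_nonneg fun _ => norm_nonneg _)]
  exact (Real.iSup_le hbound (by positivity)).trans_lt (by linarith)
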